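/- arXiv:math/0607461 — 5 statements merged into one kernel-verified Lean document; each statement's English description precedes it below -/
import Mathlib

section
/- Under Assumptions 1 and 3, let t̄ ∈ [0,T) and x̄ ∈ ℝⁿ be such that ∇ₓf(t̄,x̄) = 0 and ∇²ₓf(t̄,x̄) is positive definite. Then there exist t̂ ∈ (t̄,T] and a function u : [t̄,t̂) → ℝⁿ of class C² such that u(t̄) = x̄, ∇ₓf(t,u(t)) = 0 and ∇²ₓf(t,u(t)) is positive definite for every t ∈ [t̄,t̂); moreover the limit x̂ := lim_{t→t̂⁻} u(t) exists, and either t̂ = T or (t̂, x̂) ∈ Z_f (so in particular t̂ ∈ Π(Z_f)). -/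
open Set Filter Topology
open scoped RealInnerProductSpace

/-- The set of pairs `(t, ξ)` with `t ∈ [0,T]` such that `ξ` is a degenerate critical
point of `f t`. -/
noncomputable def degenerateCriticalSet {n : ℕ} (T : ℝ)
    (f : ℝ → EuclideanSpace ℝ (Fin n) → ℝ) :
    Set (ℝ × EuclideanSpace ℝ (Fin n)) :=
  {p | p.1 ∈ Set.Icc 0 T ∧ gradient (f p.1) p.2 = 0 ∧
    LinearMap.det ((fderiv ℝ (gradient (f p.1)) p.2 :
      EuclideanSpace ℝ (Fin n) →L[ℝ] EuclideanSpace ℝ (Fin n)) :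
      EuclideanSpace ℝ (Fin n) →ₗ[ℝ] EuclideanSpace ℝ (Fin n)) = 0}

/-!
By the implicit function theorem, applied with one-sided neighbourhoods in time, every nondegenerate
zero of a time-dependent vector field continues to later times, so Zorn's lemma yields a branch with
no proper extension. Bounded zero sets keep it in a compact set. Its cluster points at the right end
`b` then form a connected set of zeros of the field at time `b`. Zeros which are not degenerate are
isolated, so if the degenerate ones form a totally disconnected set, so do all zeros: there is only
one cluster point, which is the limit of the branch. Were it nondegenerate and `b < T`, the branch
could be continued past `b`. For a gradient field the derivative along the branch is an invertible
symmetric operator varying continuously; positive definiteness is an open condition, and also a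
closed one among such operators, so it persists along the branch.
-/

section PositiveDefinite

variable {E : Type*} [NormedAddCommGroup E] [InnerProductSpace ℝ E]

/-- Positive definiteness of the quadratic form `y ↦ ⟪A y, y⟫`. Unlike in `Matrix.PosDef`, symmetry
of `A` is not part of the notion. -/
def IsPosDef (A : E →L[ℝ] E) : Prop :=
  ∀ y, y ≠ 0 → 0 < ⟪A y, y⟫

lemma isPosDef_iff_forall_mem_sphere {A : E →L[ℝ] E} :
    IsPosDef A ↔ ∀ y ∈ Metric.sphere (0 : E) 1, 0 < ⟪A y, y⟫ := by
  refine ⟨fun hA y hy => hA y (ne_zero_of_mem_unit_sphere ⟨y, hy⟩), fun hA y hy => ?_⟩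
  have hnorm : 0 < ‖y‖ := norm_pos_iff.2 hy
  have := hA (‖y‖⁻¹ • y) (by simp [norm_smul, hnorm.ne'])
  rw [map_smul, real_inner_smul_left, real_inner_smul_right] at this
  have hscale : 0 < ‖y‖⁻¹ := inv_pos.2 hnorm
  exact (mul_pos_iff_of_pos_left hscale).1 ((mul_pos_iff_of_pos_left hscale).1 this)

lemma isOpen_setOf_isPosDef [FiniteDimensional ℝ E] : IsOpen {A : E →L[ℝ] E | IsPosDef A} := by
  refine isOpen_iff_mem_nhds.2 fun A hA => ?_
  simp only [mem_ofPred_eq, isPosDef_iff_forall_mem_sphere] at hA ⊢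
  refine (isCompact_sphere (0 : E) 1).eventually_forall_of_forall_eventually fun y hy => ?_
  have hcont : Continuous fun p : (E →L[ℝ] E) × E => ⟪p.1 p.2, p.2⟫ := by fun_prop
  exact hcont.continuousAt.eventually_const_lt (hA y hy)

lemma IsPosDef.isInvertible [FiniteDimensional ℝ E] {A : E →L[ℝ] E} (hA : IsPosDef A) :
    A.IsInvertible := by
  have hinj : Function.Injective (A : E →ₗ[ℝ] E) := by
    refine (injective_iff_map_eq_zero (A : E →ₗ[ℝ] E)).2 fun y (hy : A y = 0) => ?_
    by_contra hne
    simpa [hy] using hA y hne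
  exact ⟨(LinearEquiv.ofInjectiveEndo _ hinj).toContinuousLinearEquiv, rfl⟩

lemma isPosDef_of_isInvertible_of_nonneg {A : E →L[ℝ] E} (hsymm : ∀ x y, ⟪A x, y⟫ = ⟪A y, x⟫)
    (hinv : A.IsInvertible) (hnonneg : ∀ y, 0 ≤ ⟪A y, y⟫) : IsPosDef A := by
  intro y hy
  refine (hnonneg y).lt_of_ne' fun hzero => hy (hinv.injective ?_)
  let B : LinearMap.BilinForm ℝ E := (innerₗ E).comp (A : E →ₗ[ℝ] E)
  have hker : y ∈ LinearMap.ker B :=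
    (B.apply_apply_same_eq_zero_iff hnonneg ⟨hsymm⟩).1 hzero
  rw [map_zero, ← inner_self_eq_zero (𝕜 := ℝ)]
  exact DFunLike.congr_fun hker (A y)

lemma isInvertible_iff_det_ne_zero [FiniteDimensional ℝ E] {A : E →L[ℝ] E} :
    A.IsInvertible ↔ LinearMap.det (A : E →ₗ[ℝ] E) ≠ 0 := by
  refine ⟨?_, fun hdet => ⟨A.toContinuousLinearEquivOfDetNeZero hdet, by ext; rfl⟩⟩
  rintro ⟨e, rfl⟩
  exact e.toLinearEquiv.isUnit_det'.ne_zero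

lemma isPosDef_of_isPreconnected {X : Type*} [TopologicalSpace X] [FiniteDimensional ℝ E]
    {s : Set X} (hs : IsPreconnected s) {A : X → E →L[ℝ] E} (hA : ContinuousOn A s)
    (hsymm : ∀ p ∈ s, ∀ x y, ⟪A p x, y⟫ = ⟪A p y, x⟫) (hinv : ∀ p ∈ s, (A p).IsInvertible)
    {p q : X} (hp : p ∈ s) (hpos : IsPosDef (A p)) (hq : q ∈ s) : IsPosDef (A q) := by
  refine (hs.image A hA).subset_of_closure_inter_subset isOpen_setOf_isPosDef
    ⟨A p, mem_image_of_mem A hp, hpos⟩ ?_ (mem_image_of_mem A hq)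
  rintro _ ⟨hclosure, r, hr, rfl⟩
  refine isPosDef_of_isInvertible_of_nonneg (hsymm r hr) (hinv r hr) ?_
  have hclosed : IsClosed {L : E →L[ℝ] E | ∀ y, 0 ≤ ⟪L y, y⟫} := by
    simp only [ofPred_forall]
    exact isClosed_iInter fun y => isClosed_le continuous_const (by fun_prop)
  refine closure_minimal (fun L hL y => ?_) hclosed hclosure
  obtain rfl | hy := eq_or_ne y 0
  · simp
  · exact (hL y hy).le

end PositiveDefinite

section ImplicitFunction

variable {P E G : Type*} [TopologicalSpace P] [NormedAddCommGroup E] [NormedSpace ℝ E]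
  [NormedAddCommGroup G] [NormedSpace ℝ G]

lemma eventually_approximatesLinearOn {S : Set P} {t₀ : P} {x₀ : E} {g : P → E → G}
    {g' : P → E → E →L[ℝ] G} (hderiv : ∀ t ∈ S, ∀ x, HasFDerivAt (g t) (g' t x) x)
    (hcont : ContinuousWithinAt (Function.uncurry g') (S ×ˢ univ) (t₀, x₀)) {c : NNReal}
    (hc : 0 < c) :
    ∃ r > 0, ∀ᶠ t in 𝓝[S] t₀,
      ApproximatesLinearOn (g t) (g' t₀ x₀) (Metric.closedBall x₀ r) c := by
  have hclose : ∀ᶠ p : P × E in 𝓝[S] t₀ ×ˢ 𝓝 x₀, ‖g' p.1 p.2 - g' t₀ x₀‖ < c := by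
    rw [← nhdsWithin_univ x₀, ← nhdsWithin_prod_eq]
    exact (tendsto_iff_norm_sub_tendsto_zero.1 hcont).eventually_lt_const (by exact_mod_cast hc)
  obtain ⟨pt, hpt, px, hpx, hpp⟩ := eventually_prod_iff.1 hclose
  obtain ⟨r, hr, hball⟩ := Metric.nhds_basis_closedBall.mem_iff.1 hpx
  refine ⟨r, hr, ?_⟩
  filter_upwards [hpt, self_mem_nhdsWithin] with t ht htS x hx y hy
  exact (convex_closedBall x₀ r).norm_image_sub_le_of_norm_hasFDerivWithin_le'
    (fun z _ => (hderiv t htS z).hasFDerivWithinAt) (fun z hz => (hpp ht (hball hz)).le) hy hx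

lemma exists_dist_le_and_surjOn_closedBall [CompleteSpace E] {S : Set P} {t₀ : P} {x₀ : E}
    {g : P → E → G} {g' : P → E → E →L[ℝ] G}
    (hderiv : ∀ t ∈ S, ∀ x, HasFDerivAt (g t) (g' t x) x)
    (hcont : ContinuousWithinAt (Function.uncurry g') (S ×ˢ univ) (t₀, x₀))
    (hinv : (g' t₀ x₀).IsInvertible) :
    ∃ K : NNReal, ∃ r > 0, ∃ ρ > 0, ∀ᶠ t in 𝓝[S] t₀,
      (∀ x ∈ Metric.closedBall x₀ r, ∀ y ∈ Metric.closedBall x₀ r,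
        dist x y ≤ K * dist (g t x) (g t y)) ∧
      SurjOn (g t) (Metric.closedBall x₀ r) (Metric.closedBall (g t x₀) ρ) := by
  obtain ⟨e, he⟩ := hinv
  obtain _ | hpos := e.subsingleton_or_nnnorm_symm_pos
  · have : Subsingleton G := e.symm.injective.subsingleton
    exact ⟨0, 1, one_pos, 1, one_pos, .of_forall fun t => ⟨fun x _ y _ => by
      simp [Subsingleton.elim x y], fun y _ => ⟨x₀, by simp, Subsingleton.elim _ _⟩⟩⟩
  set N := ‖(e.symm : G →L[ℝ] E)‖₊
  obtain ⟨r, hr, happrox⟩ := eventually_approximatesLinearOn hderiv hcont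
    (c := N⁻¹ / 2) (by positivity)
  have hlt : N⁻¹ / 2 < N⁻¹ := half_lt_self (by positivity)
  have hρ : (0 : ℝ) < (N : ℝ)⁻¹ - (N⁻¹ / 2 : NNReal) := sub_pos.2 (by exact_mod_cast hlt)
  refine ⟨(N⁻¹ - N⁻¹ / 2)⁻¹, r, hr, _, mul_pos hρ hr, ?_⟩
  filter_upwards [happrox] with t ht
  rw [← he] at ht
  exact ⟨fun x hx y hy => (ht.antilipschitz (.inr hlt)).le_mul_dist ⟨x, hx⟩ ⟨y, hy⟩,
    ht.surjOn_closedBall_of_nonlinearRightInverse e.toNonlinearRightInverse hr.le subset_rfl⟩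

lemma exists_continuousOn_implicitFunction [CompleteSpace E] {S : Set P} {t₀ : P} {x₀ : E}
    {g : P → E → G} {g' : P → E → E →L[ℝ] G}
    (hderiv : ∀ t ∈ S, ∀ x, HasFDerivAt (g t) (g' t x) x)
    (hg' : ContinuousWithinAt (Function.uncurry g') (S ×ˢ univ) (t₀, x₀))
    (hg : ∀ x, ContinuousOn (fun t => g t x) S) (ht₀ : t₀ ∈ S) (hzero : g t₀ x₀ = 0)
    (hinv : (g' t₀ x₀).IsInvertible) :
    ∃ V ∈ 𝓝[S] t₀, V ⊆ S ∧
      ∃ w : P → E, w t₀ = x₀ ∧ ContinuousOn w V ∧ ∀ t ∈ V, g t (w t) = 0 := by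
  obtain ⟨K, r, hr, ρ, hρ, hev⟩ := exists_dist_le_and_surjOn_closedBall hderiv hg' hinv
  have hsmall : ∀ᶠ t in 𝓝[S] t₀, (0 : G) ∈ Metric.closedBall (g t x₀) ρ := by
    have := (hg x₀ t₀ ht₀).eventually (Metric.closedBall_mem_nhds _ hρ)
    simpa only [hzero, Metric.mem_closedBall, dist_comm] using this
  obtain ⟨V, hV, hVprop⟩ := (hev.and (hsmall.and self_mem_nhdsWithin)).exists_mem
  have hsolve : ∀ t ∈ V, ∃ x ∈ Metric.closedBall x₀ r, g t x = 0 := fun t ht =>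
    (hVprop t ht).1.2 (hVprop t ht).2.1
  choose! w hwball hwzero using hsolve
  have hest : ∀ t ∈ V, ∀ x ∈ Metric.closedBall x₀ r, dist (w t) x ≤ K * dist 0 (g t x) :=
    fun t ht x hx => hwzero t ht ▸ (hVprop t ht).1.1 (w t) (hwball t ht) x hx
  have hVS : V ⊆ S := fun t ht => (hVprop t ht).2.2
  refine ⟨V, hV, hVS, w, ?_, fun s hs => ?_, hwzero⟩
  · have := hest t₀ (mem_of_mem_nhdsWithin ht₀ hV) x₀ (Metric.mem_closedBall_self hr.le)
    rwa [hzero, dist_self, mul_zero, dist_le_zero] at this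
  · have hlim : Tendsto (fun t => K * dist 0 (g t (w s))) (𝓝[V] s) (𝓝 0) := by
      have := (hg (w s) s (hVS hs)).mono hVS
      simpa [hwzero s hs] using this.norm.tendsto.const_mul (K : ℝ)
    refine tendsto_iff_dist_tendsto_zero.2 (squeeze_zero' (.of_forall fun _ => dist_nonneg) ?_ hlim)
    filter_upwards [self_mem_nhdsWithin] with t ht using hest t ht (w s) (hwball s hs)

end ImplicitFunction

section ImplicitDifferentiation

variable {P E G : Type*} [NormedAddCommGroup P] [NormedSpace ℝ P] [NormedAddCommGroup E]
  [NormedSpace ℝ E] [NormedAddCommGroup G] [NormedSpace ℝ G]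

lemma contDiffOn_uncurry_fderiv {S : Set P} {g : P → E → G} {m n : WithTop ℕ∞}
    (hg : ContDiffOn ℝ n (Function.uncurry g) (S ×ˢ univ)) (hmn : m + 1 ≤ n) :
    ContDiffOn ℝ m (Function.uncurry fun t x => fderiv ℝ (g t) x) (S ×ˢ univ) := by
  intro p hp
  have hg' : ContDiffWithinAt ℝ n (Function.uncurry fun (q : P × E) x => g q.1 x)
      ((S ×ˢ univ) ×ˢ univ) (p, p.2) :=
    ContDiffWithinAt.comp (p, p.2) (hg p hp) (f := fun q : (P × E) × E => (q.1.1, q.2))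
      (by fun_prop) fun q hq => ⟨hq.1.1, mem_univ _⟩
  simpa only [fderivWithin_univ, Function.uncurry_def] using
    hg'.fderivWithin contDiffWithinAt_snd uniqueDiffOn_univ hmn hp fun _ _ => mem_univ _

lemma hasFDerivAt_slice {S : Set P} {g : P → E → G} {t : P} {x : E}
    (hg : DifferentiableWithinAt ℝ (Function.uncurry g) (S ×ˢ univ) (t, x)) (ht : t ∈ S) :
    HasFDerivAt (g t)
      (fderivWithin ℝ (Function.uncurry g) (S ×ˢ univ) (t, x) ∘L .inr ℝ P E) x := by
  rw [← hasFDerivWithinAt_univ]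
  exact hg.hasFDerivWithinAt.comp x (hasFDerivAt_prodMk_right t x).hasFDerivWithinAt
    fun y _ => ⟨ht, mem_univ y⟩

lemma hasFDerivWithinAt_implicitFunction {s : Set P} {t : Set (P × E)} {g : P × E → G}
    {g' : P × E →L[ℝ] G} {u : P → E} {p : P} (hp : p ∈ s)
    (hg : HasFDerivWithinAt g g' t (p, u p)) (hinv : (g' ∘L .inr ℝ P E).IsInvertible)
    (hu : ContinuousWithinAt u s p) (hmaps : MapsTo (fun q => (q, u q)) s t)
    (hzero : ∀ q ∈ s, g (q, u q) = 0) :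
    HasFDerivWithinAt u (-((g' ∘L .inr ℝ P E).inverse ∘L g' ∘L .inl ℝ P E)) s p := by
  have hgraph : Tendsto (fun q => (q, u q)) (𝓝[s] p) (𝓝[t] (p, u p)) :=
    tendsto_nhdsWithin_iff.2 ⟨continuousWithinAt_id.prodMk hu,
      eventually_nhdsWithin_of_forall hmaps⟩
  obtain ⟨e, he⟩ := hinv
  let inv : P × G →L[ℝ] P × E := (ContinuousLinearMap.fst ℝ P G).prod
    (e.symm ∘L (.snd ℝ P G - (g' ∘L .inl ℝ P E) ∘L .fst ℝ P G))
  have hinv_left : Function.LeftInverse inv ((ContinuousLinearMap.fst ℝ P E).prod g') := by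
    rintro ⟨v, y⟩
    have hsplit : g' (v, y) - g' (v, 0) = e y := by
      simpa [← map_sub] using (DFunLike.congr_fun he y).symm
    have : e.symm (g' (v, y) - g' (v, 0)) = y := by rw [hsplit, e.symm_apply_apply]
    simpa [inv] using this
  have hzero' : (fun q : P × E => (q.1, g q)) ∘ (fun q => (q, u q)) =ᶠ[𝓝[s] p] fun q => (q, 0) :=
    eventually_nhdsWithin_of_forall fun q hq => by simp [hzero q hq]
  have := HasFDerivWithinAt.of_comp_of_leftInverse hgraph (hasFDerivWithinAt_fst.prodMk hg)
    (hasFDerivAt_prodMk_left p (0 : G)).hasFDerivWithinAt hzero' hinv_left hp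
  rw [← he, ContinuousLinearMap.inverse_equiv]
  refine (hasFDerivAt_snd.comp_hasFDerivWithinAt p this).congr_fderiv ?_
  ext v
  simp [inv]

lemma contDiffOn_implicitFunction [CompleteSpace E] {k : ℕ} {s : Set P} {t : Set (P × E)}
    {g : P × E → G} {u : P → E} (hs : UniqueDiffOn ℝ s) (ht : UniqueDiffOn ℝ t)
    (hg : ContDiffOn ℝ (k + 1) g t) (hu : ContinuousOn u s)
    (hmaps : MapsTo (fun q => (q, u q)) s t) (hzero : ∀ q ∈ s, g (q, u q) = 0)
    (hinv : ∀ q ∈ s, (fderivWithin ℝ g t (q, u q) ∘L .inr ℝ P E).IsInvertible) :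
    ContDiffOn ℝ (k + 1) u s := by
  have hderiv : ∀ q ∈ s, HasFDerivWithinAt u _ s q := fun q hq =>
    hasFDerivWithinAt_implicitFunction hq
      (hg.differentiableOn (by simp) _ (hmaps hq)).hasFDerivWithinAt (hinv q hq) (hu q hq)
      hmaps hzero
  have hbootstrap : ∀ j : ℕ, j ≤ k → ContDiffOn ℝ j u s → ContDiffOn ℝ (j + 1) u s := by
    intro j hj huj
    have hD : ContDiffOn ℝ j (fun q => fderivWithin ℝ g t (q, u q)) s :=
      (hg.fderivWithin ht (by exact_mod_cast Nat.succ_le_succ hj)).comp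
        (contDiffOn_id.prodMk huj) hmaps
    have hDinr : ContDiffOn ℝ j (fun q => fderivWithin ℝ g t (q, u q) ∘L .inr ℝ P E) s :=
      hD.clm_comp contDiffOn_const
    have hDinv : ContDiffOn ℝ j
        (fun q => (fderivWithin ℝ g t (q, u q) ∘L .inr ℝ P E).inverse) s := fun q hq =>
      ContDiffAt.comp_contDiffWithinAt q (g := ContinuousLinearMap.inverse)
        (hinv q hq).contDiffAt_map_inverse (hDinr q hq)
    refine (contDiffOn_succ_iff_fderivWithin hs).2
      ⟨fun q hq => (hderiv q hq).differentiableWithinAt, by simp, ?_⟩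
    exact (hDinv.clm_comp (hD.clm_comp contDiffOn_const)).neg.congr fun q hq =>
      (hderiv q hq).fderivWithin (hs q hq)
  have hall : ∀ j : ℕ, j ≤ k + 1 → ContDiffOn ℝ j u s := by
    intro j hj
    induction j with
    | zero => exact contDiffOn_zero.2 hu
    | succ j ih => exact_mod_cast hbootstrap j (by omega) (ih (by omega))
  exact_mod_cast hall (k + 1) le_rfl

end ImplicitDifferentiation

section ClusterPoints

variable {X : Type*} [TopologicalSpace X] [T2Space X] {L : Filter X} {K : Set X}

lemma isPreconnected_setOf_clusterPt (hK : IsCompact K) (hKL : K ∈ L)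
    (hL : ∀ U ∈ L, ∃ V ∈ L, V ⊆ U ∧ IsPreconnected V) : IsPreconnected {x | ClusterPt x L} := by
  have hcompact : IsCompact {x | ClusterPt x L} :=
    hK.of_isClosed_subset isClosed_setOfPred_clusterPt fun x hx =>
      hK.isClosed.closure_eq ▸ mem_closure_iff_clusterPt.2 (hx.mono (le_principal_iff.2 hKL))
  refine (isPreconnected_iff_subset_of_fully_disjoint_closed hcompact.isClosed).2
    fun A B hA hB hcover hdisj => ?_
  obtain ⟨U, V, hU, hV, hAU, hBV, hUV⟩ := SeparatedNhds.of_isCompact_isCompact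
    (hcompact.inter_right hA) (hcompact.inter_right hB)
    (hdisj.mono inter_subset_right inter_subset_right)
  have hmem : U ∪ V ∈ L := hK.adherence_nhdset (le_principal_iff.2 hKL) (hU.union hV)
    fun x _ hx => (hcover hx).imp (fun h => hAU ⟨hx, h⟩) (fun h => hBV ⟨hx, h⟩)
  obtain ⟨W, hWL, hWUV, hW⟩ := hL _ hmem
  have not_clusterPt : ∀ {O O' : Set X}, W ⊆ O → Disjoint O O' → IsOpen O' → ∀ x ∈ O',
      ¬ ClusterPt x L := fun hWO hOO' hO' x hx hcl =>
    (clusterPt_iff_nonempty.1 hcl (hO'.mem_nhds hx) hWL).ne_empty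
      ((hOO'.mono_left hWO).symm.inter_eq)
  rcases hW.subset_or_subset hU hV hUV hWUV with hWU | hWV
  · exact .inl fun x hx => (hcover hx).resolve_right fun hxB =>
      not_clusterPt hWU hUV hV x (hBV ⟨hx, hxB⟩) hx
  · exact .inr fun x hx => (hcover hx).resolve_left fun hxA =>
      not_clusterPt hWV hUV.symm hU x (hAU ⟨hx, hxA⟩) hx

lemma exists_le_nhds_of_isTotallyDisconnected [L.NeBot] (hK : IsCompact K) (hKL : K ∈ L)
    (hL : ∀ U ∈ L, ∃ V ∈ L, V ⊆ U ∧ IsPreconnected V) {Z : Set X} (hZ : IsTotallyDisconnected Z)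
    (hLZ : ∀ x, ClusterPt x L → x ∈ Z) : ∃ x ∈ Z, L ≤ 𝓝 x := by
  have hsub : {x | ClusterPt x L}.Subsingleton :=
    hZ _ hLZ (isPreconnected_setOf_clusterPt hK hKL hL)
  obtain ⟨x, -, hx⟩ := hK (le_principal_iff.2 hKL)
  exact ⟨x, hLZ x hx, hK.le_nhds_of_unique_clusterPt hKL fun y _ hy => hsub hy hx⟩

lemma exists_tendsto_nhdsLT_of_isTotallyDisconnected {u : ℝ → X} {a b : ℝ} (hab : a < b)
    (hu : ContinuousOn u (Ico a b)) (hK : IsCompact K) (huK : MapsTo u (Ico a b) K) {Z : Set X}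
    (hZ : IsTotallyDisconnected Z) (huZ : ∀ x, MapClusterPt x (𝓝[<] b) u → x ∈ Z) :
    ∃ x ∈ Z, Tendsto u (𝓝[<] b) (𝓝 x) := by
  have : (𝓝[<] b).NeBot := nhdsLT_neBot b
  refine exists_le_nhds_of_isTotallyDisconnected hK ?_ (fun U hU => ?_) hZ huZ
  · exact mem_map.2 (mem_of_superset (Ico_mem_nhdsLT hab) huK)
  · obtain ⟨c, hc, hcU⟩ := (mem_nhdsLT_iff_exists_Ioo_subset' hab).1
      (inter_mem (mem_map.1 hU) (Ico_mem_nhdsLT hab))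
    refine ⟨u '' Ioo c b, image_mem_map (Ioo_mem_nhdsLT hc), ?_, ?_⟩
    · exact image_subset_iff.2 fun t ht => (hcU ht).1
    · exact isPreconnected_Ioo.image u (hu.mono fun t ht => (hcU ht).2)

end ClusterPoints

section DegenerateZeros

variable {E : Type*} [NormedAddCommGroup E] [NormedSpace ℝ E]

/-- The degenerate zeros of a vector field `g`, i.e. those at which its derivative is not
invertible. -/
def degenerateZeros (g : E → E) : Set E :=
  {x | g x = 0 ∧ ¬ (fderiv ℝ g x).IsInvertible}

lemma isTotallyDisconnected_setOf_eq_zero {g : E → E} (hg : Differentiable ℝ g)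
    (hdeg : IsTotallyDisconnected (degenerateZeros g)) : IsTotallyDisconnected {x | g x = 0} := by
  intro s hszero hs
  by_contra hnontriv
  have hperfect : Preperfect s := hs.preperfect_of_nontrivial (not_subsingleton_iff.1 hnontriv)
  refine hnontriv (hdeg s (fun x hx => ⟨hszero hx, ?_⟩) hs)
  rintro ⟨e, he⟩
  have hderiv : HasFDerivAt g (e : E →L[ℝ] E) x := he ▸ (hg x).hasFDerivAt
  have hisolated : ∀ᶠ y in 𝓝[≠] x, g y ≠ 0 := hderiv.eventually_ne ⟨_, e.antilipschitz⟩
  obtain ⟨y, hy, hys⟩ :=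
    (hisolated.and_frequently (accPt_iff_frequently_nhdsNE.1 (hperfect x hx))).exists
  exact hy (hszero hys)

end DegenerateZeros

section Branches

variable {E : Type*} [NormedAddCommGroup E] [NormedSpace ℝ E] {F : ℝ → E → E} {a b c T : ℝ}
  {x₀ x : E} {u v w : ℝ → E}

/-- A continuous branch `u` of nondegenerate zeros of the time-dependent vector field `F`, issued
from `x₀` at time `a` and defined up to, but not including, time `b > a`. The values of `u` outside
`[a, b)` are irrelevant. -/
structure IsNondegenerateBranch (F : ℝ → E → E) (a : ℝ) (x₀ : E) (b : ℝ) (u : ℝ → E) : Prop where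
  lt : a < b
  apply_left : u a = x₀
  continuousOn : ContinuousOn u (Ico a b)
  eq_zero : ∀ t ∈ Ico a b, F t (u t) = 0
  isInvertible_fderiv : ∀ t ∈ Ico a b, (fderiv ℝ (F t) (u t)).IsInvertible

namespace IsNondegenerateBranch

lemma congr (hu : IsNondegenerateBranch F a x₀ b u) (huv : EqOn u v (Ico a b)) :
    IsNondegenerateBranch F a x₀ b v where
  lt := hu.lt
  apply_left := huv (left_mem_Ico.2 hu.lt) ▸ hu.apply_left
  continuousOn := hu.continuousOn.congr huv.symm
  eq_zero t ht := huv ht ▸ hu.eq_zero t ht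
  isInvertible_fderiv t ht := huv ht ▸ hu.isInvertible_fderiv t ht

lemma of_forall_exists_gt (hab : a < b)
    (h : ∀ t ∈ Ico a b, ∃ c > t, IsNondegenerateBranch F a x₀ c u) :
    IsNondegenerateBranch F a x₀ b u where
  lt := hab
  apply_left := let ⟨_, _, hc⟩ := h a (left_mem_Ico.2 hab); hc.apply_left
  continuousOn t ht := by
    obtain ⟨c, htc, hc⟩ := h t ht
    refine (hc.continuousOn t ⟨ht.1, htc⟩).mono_of_mem_nhdsWithin ?_
    filter_upwards [self_mem_nhdsWithin, mem_nhdsWithin_of_mem_nhds (Iio_mem_nhds htc)]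
      with s hs hsc using ⟨hs.1, hsc⟩
  eq_zero t ht := let ⟨_, htc, hc⟩ := h t ht; hc.eq_zero t ⟨ht.1, htc⟩
  isInvertible_fderiv t ht := let ⟨_, htc, hc⟩ := h t ht; hc.isInvertible_fderiv t ⟨ht.1, htc⟩

lemma glue (hu : IsNondegenerateBranch F a x₀ b u) (hlim : Tendsto u (𝓝[<] b) (𝓝 x))
    (hw : IsNondegenerateBranch F b x c w) :
    IsNondegenerateBranch F a x₀ c ((Iio b).piecewise u w) where
  lt := hu.lt.trans hw.lt
  apply_left := by rw [piecewise_eq_of_mem (Iio b) u w hu.lt, hu.apply_left]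
  continuousOn := by
    have hb : (Iio b).piecewise u w b = x := by simp [hw.apply_left]
    refine ContinuousOn.piecewise' ?_ ?_ ?_ ?_
    · rintro t ⟨-, ht⟩
      obtain rfl : t = b := by simpa using ht
      exact hb ▸ hlim.mono_left (nhdsWithin_mono _ inter_subset_right)
    · rintro t ⟨-, ht⟩
      obtain rfl : t = b := by simpa using ht
      rw [hb, ← hw.apply_left]
      refine (hw.continuousOn t (left_mem_Ico.2 hw.lt)).mono_left (nhdsWithin_mono _ ?_)
      exact fun s hs => ⟨not_lt.1 hs.2, hs.1.2⟩
    · exact hu.continuousOn.mono fun s hs => ⟨hs.1.1, hs.2⟩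
    · exact hw.continuousOn.mono fun s hs => ⟨not_lt.1 hs.2, hs.1.2⟩
  eq_zero t ht := by
    obtain htb | htb := lt_or_ge t b
    · simpa [htb] using hu.eq_zero t ⟨ht.1, htb⟩
    · simpa [htb.not_gt] using hw.eq_zero t ⟨htb, ht.2⟩
  isInvertible_fderiv t ht := by
    obtain htb | htb := lt_or_ge t b
    · simpa [htb] using hu.isInvertible_fderiv t ⟨ht.1, htb⟩
    · simpa [htb.not_gt] using hw.isInvertible_fderiv t ⟨htb, ht.2⟩

end IsNondegenerateBranch

lemma exists_eqOn_of_pairwise_eqOn {ι α β : Type*} [Nonempty β] {s : ι → Set α} {f : ι → α → β}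
    (h : ∀ i j, EqOn (f i) (f j) (s i ∩ s j)) : ∃ g, ∀ i, EqOn (f i) g (s i) := by
  have hvalue : ∀ t, ∃ y, ∀ i, t ∈ s i → f i t = y := by
    intro t
    by_cases ht : ∃ j, t ∈ s j
    · obtain ⟨j, hj⟩ := ht
      exact ⟨f j t, fun i hi => h i j ⟨hi, hj⟩⟩
    · exact ⟨Classical.arbitrary β, fun i hi => (ht ⟨i, hi⟩).elim⟩
  choose g hg using hvalue
  exact ⟨g, fun i t ht => hg t i ht⟩

lemma exists_maximal_isNondegenerateBranch
    (h : ∃ b ≤ T, ∃ u, IsNondegenerateBranch F a x₀ b u) :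
    ∃ b ≤ T, ∃ u, IsNondegenerateBranch F a x₀ b u ∧
      ∀ c ≤ T, ∀ v, IsNondegenerateBranch F a x₀ c v → EqOn u v (Ico a b) → c ≤ b := by
  let Branch := {p : ℝ × (ℝ → E) // p.1 ≤ T ∧ IsNondegenerateBranch F a x₀ p.1 p.2}
  let le (p q : Branch) : Prop := p.1.1 ≤ q.1.1 ∧ EqOn p.1.2 q.1.2 (Ico a p.1.1)
  have : Nonempty Branch := let ⟨b, hb, u, hu⟩ := h; ⟨⟨(b, u), hb, hu⟩⟩
  have hchain : ∀ C : Set Branch, IsChain le C → C.Nonempty → ∃ q, ∀ p ∈ C, le p q := by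
    intro C hC hCne
    have hbdd : BddAbove ((fun p : Branch => p.1.1) '' C) :=
      ⟨T, forall_mem_image.2 fun p _ => p.2.1⟩
    set B := sSup ((fun p : Branch => p.1.1) '' C)
    have hle : ∀ p ∈ C, p.1.1 ≤ B := fun p hp => le_csSup hbdd (mem_image_of_mem _ hp)
    obtain ⟨v, hv⟩ : ∃ v, ∀ p : C, EqOn p.1.1.2 v (Ico a p.1.1.1) := by
      refine exists_eqOn_of_pairwise_eqOn fun p q t ht => ?_
      obtain rfl | hne := eq_or_ne p q
      · rfl
      · exact (hC p.2 q.2 (Subtype.coe_injective.ne hne)).elim (fun h => h.2 ht.1)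
          fun h => (h.2 ht.2).symm
    have hBranch : IsNondegenerateBranch F a x₀ B v := by
      refine .of_forall_exists_gt ?_ fun t ht => ?_
      · obtain ⟨p, hp⟩ := hCne
        exact p.2.2.lt.trans_le (hle p hp)
      · obtain ⟨_, ⟨p, hp, rfl⟩, htp⟩ := exists_lt_of_lt_csSup (hCne.image _) ht.2
        exact ⟨p.1.1, htp, p.2.2.congr (hv ⟨p, hp⟩)⟩
    have hBT : B ≤ T := csSup_le (hCne.image _) (forall_mem_image.2 fun p _ => p.2.1)
    exact ⟨⟨(B, v), hBT, hBranch⟩, fun p hp => ⟨hle p hp, hv ⟨p, hp⟩⟩⟩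
  obtain ⟨m, hm⟩ := exists_maximal_of_nonempty_chains_bounded hchain
    fun hpq hqr => ⟨hpq.1.trans hqr.1,
      hpq.2.trans (hqr.2.mono (Ico_subset_Ico_right hpq.1))⟩
  exact ⟨m.1.1, m.2.1, m.1.2, m.2.2, fun c hc v hv huv =>
    not_lt.1 fun hmc => (hm ⟨(c, v), hc, hv⟩ ⟨hmc.le, huv⟩).1.not_gt hmc⟩

lemma exists_isNondegenerateBranch [CompleteSpace E] (haT : a < T)
    (hF : ContDiffOn ℝ 1 (Function.uncurry F) (Icc a T ×ˢ univ)) (hzero : F a x₀ = 0)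
    (hinv : (fderiv ℝ (F a) x₀).IsInvertible) :
    ∃ b ≤ T, ∃ u, IsNondegenerateBranch F a x₀ b u := by
  have ha : a ∈ Icc a T := left_mem_Icc.2 haT.le
  have hF' : ContinuousOn (Function.uncurry fun t x => fderiv ℝ (F t) x) (Icc a T ×ˢ univ) :=
    (contDiffOn_uncurry_fderiv (m := 0) hF (by simp)).continuousOn
  have hderiv : ∀ t ∈ Icc a T, ∀ x, HasFDerivAt (F t) (fderiv ℝ (F t) x) x := fun t ht x =>
    (hasFDerivAt_slice (hF.differentiableOn one_ne_zero (t, x) ⟨ht, mem_univ x⟩)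
      ht).differentiableAt.hasFDerivAt
  obtain ⟨V, hV, hVsub, w, hwa, hw, hwzero⟩ := exists_continuousOn_implicitFunction hderiv
    (hF' (a, x₀) ⟨ha, mem_univ x₀⟩)
    (fun x => hF.continuousOn.comp (f := fun t => (t, x)) (by fun_prop)
      fun t ht => ⟨ht, mem_univ x⟩) ha hzero hinv
  have hinv_ev : ∀ᶠ t in 𝓝[Icc a T] a, (fderiv ℝ (F t) (w t)).IsInvertible := by
    have hcont : ContinuousOn (fun t => fderiv ℝ (F t) (w t)) V :=
      hF'.comp (f := fun t => (t, w t)) (continuousOn_id.prodMk hw)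
        fun t ht => ⟨hVsub ht, mem_univ _⟩
    rw [← hwa] at hinv
    exact ((hcont a (mem_of_mem_nhdsWithin ha hV)).mono_of_mem_nhdsWithin hV).eventually_mem
      (ContinuousLinearEquiv.isOpen.mem_nhds hinv)
  rw [nhdsWithin_Icc_eq_nhdsGE haT] at hV hinv_ev
  obtain ⟨b, hb, hbV⟩ := (mem_nhdsGE_iff_exists_mem_Ioc_Ico_subset haT).1 (inter_mem hV hinv_ev)
  exact ⟨b, hb.2, w, hb.1, hwa, hw.mono fun t ht => (hbV ht).1, fun t ht => hwzero t (hbV ht).1,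
    fun t ht => (hbV ht).2⟩

lemma IsNondegenerateBranch.eq_zero_of_mapClusterPt (hu : IsNondegenerateBranch F a x₀ b u)
    (hF : ContinuousOn (Function.uncurry F) (Icc a b ×ˢ univ))
    (hx : MapClusterPt x (𝓝[<] b) u) : F b x = 0 := by
  obtain ⟨l, hl, hlim⟩ := mapClusterPt_iff_ultrafilter.1 hx
  have hIco : ∀ᶠ t in l, t ∈ Ico a b := hl (Ico_mem_nhdsLT hu.lt)
  have hgraph : Tendsto (fun t => (t, u t)) l (𝓝[Icc a b ×ˢ univ] (b, x)) :=
    tendsto_nhdsWithin_iff.2 ⟨(tendsto_nhds_of_tendsto_nhdsWithin hl).prodMk_nhds hlim,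
      hIco.mono fun t ht => ⟨Ico_subset_Icc_self ht, mem_univ _⟩⟩
  have hFlim : Tendsto (fun t => F t (u t)) l (𝓝 (F b x)) :=
    (hF (b, x) ⟨right_mem_Icc.2 hu.lt.le, mem_univ x⟩).tendsto.comp hgraph
  exact tendsto_nhds_unique_of_eventuallyEq hFlim tendsto_const_nhds (hIco.mono hu.eq_zero)

lemma IsNondegenerateBranch.contDiffOn [CompleteSpace E] {k : ℕ}
    (hu : IsNondegenerateBranch F a x₀ b u)
    (hF : ContDiffOn ℝ (k + 1) (Function.uncurry F) (Icc a b ×ˢ univ)) :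
    ContDiffOn ℝ (k + 1) u (Ico a b) := by
  have hmaps : MapsTo (fun t => (t, u t)) (Ico a b) (Icc a b ×ˢ univ) :=
    fun t ht => ⟨Ico_subset_Icc_self ht, mem_univ _⟩
  refine contDiffOn_implicitFunction (uniqueDiffOn_Ico a b)
    ((uniqueDiffOn_Icc hu.lt).prod uniqueDiffOn_univ) hF hu.continuousOn hmaps hu.eq_zero
    fun t ht => ?_
  rw [← (hasFDerivAt_slice (hF.differentiableOn (by simp) _ (hmaps ht)) (hmaps ht).1).fderiv]
  exact hu.isInvertible_fderiv t ht

theorem exists_isNondegenerateBranch_tendsto [FiniteDimensional ℝ E] (haT : a < T)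
    (hF : ContDiffOn ℝ 1 (Function.uncurry F) (Icc a T ×ˢ univ))
    (hbdd : Bornology.IsBounded {x | ∃ t ∈ Icc a T, F t x = 0})
    (hdeg : ∀ t ∈ Icc a T, IsTotallyDisconnected (degenerateZeros (F t)))
    (hzero : F a x₀ = 0) (hinv : (fderiv ℝ (F a) x₀).IsInvertible) :
    ∃ b ≤ T, ∃ u, IsNondegenerateBranch F a x₀ b u ∧
      ∃ x, Tendsto u (𝓝[<] b) (𝓝 x) ∧ (b = T ∨ x ∈ degenerateZeros (F b)) := by
  obtain ⟨b, hbT, u, hu, hmax⟩ := exists_maximal_isNondegenerateBranch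
    (exists_isNondegenerateBranch haT hF hzero hinv)
  have hb : b ∈ Icc a T := ⟨hu.lt.le, hbT⟩
  have hdiff : Differentiable ℝ (F b) := fun x =>
    (hasFDerivAt_slice (hF.differentiableOn one_ne_zero (b, x) ⟨hb, mem_univ x⟩)
      hb).differentiableAt
  obtain ⟨x, hx, hlim⟩ := exists_tendsto_nhdsLT_of_isTotallyDisconnected hu.lt hu.continuousOn
    hbdd.isCompact_closure
    (fun t ht => subset_closure ⟨t, ⟨ht.1, ht.2.le.trans hbT⟩, hu.eq_zero t ht⟩)
    (isTotallyDisconnected_setOf_eq_zero hdiff (hdeg b hb))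
    (fun x hx => hu.eq_zero_of_mapClusterPt
      (hF.continuousOn.mono (prod_mono_left (Icc_subset_Icc_right hbT))) hx)
  refine ⟨b, hbT, u, hu, x, hlim, hbT.eq_or_lt.imp_right fun hlt => ⟨hx, fun hinv => ?_⟩⟩
  obtain ⟨c, hcT, w, hw⟩ := exists_isNondegenerateBranch hlt
    (hF.mono (prod_mono_left (Icc_subset_Icc_left hu.lt.le))) hx hinv
  exact (hmax c hcT _ (hu.glue hlim hw) fun t ht =>
    (piecewise_eq_of_mem (Iio b) u w ht.2).symm).not_gt hw.lt

end Branches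

section GradientFields

variable {E : Type*} [NormedAddCommGroup E] [InnerProductSpace ℝ E]

lemma isBounded_setOf_exists_eq_zero_of_coercive {ι : Type*} {S : Set ι} {F : ι → E → E}
    {a₀ c₀ : ℝ} (hc₀ : 0 < c₀) (hF : ∀ t ∈ S, ∀ x, c₀ * ‖x‖ ^ 2 - a₀ ≤ ⟪F t x, x⟫) :
    Bornology.IsBounded {x | ∃ t ∈ S, F t x = 0} := by
  refine isBounded_iff_forall_norm_le.2 ⟨√(a₀ / c₀), ?_⟩
  rintro x ⟨t, ht, hx⟩
  have hle : c₀ * ‖x‖ ^ 2 ≤ a₀ := by simpa [hx] using hF t ht x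
  exact Real.le_sqrt_of_sq_le ((le_div_iff₀' hc₀).2 hle)

lemma contDiffOn_uncurry_gradient [CompleteSpace E] {P : Type*} [NormedAddCommGroup P]
    [NormedSpace ℝ P] {S : Set P} {f : P → E → ℝ} {m n : WithTop ℕ∞}
    (hf : ContDiffOn ℝ n (Function.uncurry f) (S ×ˢ univ)) (hmn : m + 1 ≤ n) :
    ContDiffOn ℝ m (Function.uncurry fun t x => gradient (f t) x) (S ×ˢ univ) :=
  (InnerProductSpace.toDual ℝ E).symm.toContinuousLinearEquiv.contDiff.comp_contDiffOn
    (contDiffOn_uncurry_fderiv hf hmn)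

lemma inner_fderiv_gradient_comm [CompleteSpace E] {f : E → ℝ} {x : E} (hf : ContDiffAt ℝ 2 f x)
    (y z : E) :
    ⟪fderiv ℝ (gradient f) x y, z⟫ = ⟪fderiv ℝ (gradient f) x z, y⟫ := by
  have hsymm : IsSymmSndFDerivAt ℝ f x := hf.isSymmSndFDerivAt (by simp)
  have hhess : ∀ v w, ⟪fderiv ℝ (gradient f) x v, w⟫ = fderiv ℝ (fderiv ℝ f) x v w := by
    intro v w
    have : fderiv ℝ (gradient f) x v =
        (InnerProductSpace.toDual ℝ E).symm (fderiv ℝ (fderiv ℝ f) x v) :=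
      DFunLike.congr_fun
        ((InnerProductSpace.toDual ℝ E).symm.toContinuousLinearEquiv.comp_fderiv) v
    rw [this, InnerProductSpace.toDual_symm_apply]
  rw [hhess, hhess, hsymm.eq]

lemma IsNondegenerateBranch.isPosDef_fderiv_gradient [FiniteDimensional ℝ E] {f : ℝ → E → ℝ}
    {a b : ℝ} {x₀ : E} {u : ℝ → E}
    (hu : IsNondegenerateBranch (fun t => gradient (f t)) a x₀ b u)
    (hf : ContDiffOn ℝ 2 (Function.uncurry f) (Ico a b ×ˢ univ))
    (hpos : IsPosDef (fderiv ℝ (gradient (f a)) x₀)) {t : ℝ} (ht : t ∈ Ico a b) :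
    IsPosDef (fderiv ℝ (gradient (f t)) (u t)) := by
  have hgrad : ContDiffOn ℝ 1 (Function.uncurry fun t x => gradient (f t) x) (Ico a b ×ˢ univ) :=
    contDiffOn_uncurry_gradient hf one_add_one_eq_two.le
  have hcont : ContinuousOn (fun t => fderiv ℝ (gradient (f t)) (u t)) (Ico a b) :=
    (contDiffOn_uncurry_fderiv (m := 0) hgrad (by simp)).continuousOn.comp
      (f := fun t => (t, u t)) (continuousOn_id.prodMk hu.continuousOn)
      fun s hs => ⟨hs, mem_univ _⟩
  have hslice : ∀ s ∈ Ico a b, ContDiff ℝ 2 (f s) := fun s hs =>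
    contDiffOn_univ.1 <| hf.comp (f := fun x => (s, x)) (by fun_prop) fun x _ => ⟨hs, mem_univ x⟩
  exact isPosDef_of_isPreconnected isPreconnected_Ico hcont
    (fun s hs => inner_fderiv_gradient_comm (hslice s hs).contDiffAt) hu.isInvertible_fderiv
    (left_mem_Ico.2 hu.lt) (hu.apply_left.symm ▸ hpos) ht

end GradientFields

theorem branch_continuation_general {E : Type*} [NormedAddCommGroup E] [InnerProductSpace ℝ E]
    [FiniteDimensional ℝ E] {a T : ℝ} (haT : a < T) {k : ℕ} {f : ℝ → E → ℝ}
    (hf : ContDiffOn ℝ (k + 2) (Function.uncurry f) (Icc a T ×ˢ univ))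
    (hbdd : Bornology.IsBounded {x | ∃ t ∈ Icc a T, gradient (f t) x = 0})
    (hdeg : ∀ t ∈ Icc a T, IsTotallyDisconnected (degenerateZeros (gradient (f t))))
    {x₀ : E} (hcrit : gradient (f a) x₀ = 0) (hpos : IsPosDef (fderiv ℝ (gradient (f a)) x₀)) :
    ∃ b ∈ Ioc a T, ∃ u : ℝ → E, ContDiffOn ℝ (k + 1) u (Ico a b) ∧ u a = x₀ ∧
      (∀ t ∈ Ico a b, gradient (f t) (u t) = 0 ∧ IsPosDef (fderiv ℝ (gradient (f t)) (u t))) ∧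
      ∃ x, Tendsto u (𝓝[<] b) (𝓝 x) ∧ (b = T ∨ x ∈ degenerateZeros (gradient (f b))) := by
  have hgrad : ContDiffOn ℝ (k + 1) (Function.uncurry fun t x => gradient (f t) x)
      (Icc a T ×ˢ univ) := contDiffOn_uncurry_gradient hf (by norm_num [add_assoc])
  obtain ⟨b, hbT, u, hu, hlim⟩ := exists_isNondegenerateBranch_tendsto haT
    (hgrad.of_le le_add_self) hbdd hdeg hcrit hpos.isInvertible
  have hIcc : Icc a b ⊆ Icc a T := Icc_subset_Icc_right hbT
  refine ⟨b, ⟨hu.lt, hbT⟩, u, hu.contDiffOn (hgrad.mono (prod_mono_left hIcc)), hu.apply_left,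
    fun t ht => ⟨hu.eq_zero t ht, hu.isPosDef_fderiv_gradient ?_ hpos ht⟩, hlim⟩
  exact (hf.of_le le_add_self).mono (prod_mono_left (Ico_subset_Icc_self.trans hIcc))

section DegenerateCriticalSet

variable {n : ℕ} {T : ℝ} {f : ℝ → EuclideanSpace ℝ (Fin n) → ℝ}

lemma mem_degenerateCriticalSet_iff {t : ℝ} {x : EuclideanSpace ℝ (Fin n)} :
    (t, x) ∈ degenerateCriticalSet T f ↔ t ∈ Icc 0 T ∧ x ∈ degenerateZeros (gradient (f t)) :=
  and_congr_right' <| and_congr_right' <| by rw [isInvertible_iff_det_ne_zero, not_not]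

lemma isTotallyDisconnected_degenerateZeros_gradient
    (hinj : ∀ p ∈ degenerateCriticalSet T f, ∀ q ∈ degenerateCriticalSet T f, p.1 = q.1 → p = q)
    {t : ℝ} (ht : t ∈ Icc 0 T) : IsTotallyDisconnected (degenerateZeros (gradient (f t))) := by
  have hsub : (degenerateZeros (gradient (f t))).Subsingleton := fun x hx y hy =>
    congrArg Prod.snd <| hinj (t, x) (mem_degenerateCriticalSet_iff.2 ⟨ht, hx⟩) (t, y)
      (mem_degenerateCriticalSet_iff.2 ⟨ht, hy⟩) rfl
  exact fun s hs _ => hsub.anti hs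

end DegenerateCriticalSet

/-- under Assumptions 1 and 3, from a point `(t̄, x̄)` with `∇ₓf(t̄,x̄) = 0`
and positive definite Hessian, a `C²` branch of nondegenerate critical points can be
continued on a maximal interval `[t̄, t̂)`; the left limit `x̂` at `t̂` exists and either
`t̂ = T` or `(t̂, x̂) ∈ Z_f`. -/
theorem branch_continuation
    {n : ℕ} (hn : 1 ≤ n) {T : ℝ} (hT : 0 < T)
    (f : ℝ → EuclideanSpace ℝ (Fin n) → ℝ)
    (hf : ContDiffOn ℝ 3 (Function.uncurry f)
      (Set.Icc 0 T ×ˢ (Set.univ : Set (EuclideanSpace ℝ (Fin n)))))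
    {a₀ c₀ : ℝ} (ha₀ : 0 ≤ a₀) (hc₀ : 0 < c₀)
    (hA1 : ∀ t ∈ Set.Icc (0:ℝ) T, ∀ x : EuclideanSpace ℝ (Fin n),
      ⟪gradient (f t) x, x⟫ ≥ c₀ * ‖x‖ ^ 2 - a₀)
    (hA3fin : (degenerateCriticalSet T f).Finite)
    (hA3inj : ∀ p ∈ degenerateCriticalSet T f, ∀ q ∈ degenerateCriticalSet T f,
      p.1 = q.1 → p = q)
    (hA3end : ∀ p ∈ degenerateCriticalSet T f, p.1 ≠ 0 ∧ p.1 ≠ T)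
    (tbar : ℝ) (htbar : tbar ∈ Set.Ico (0:ℝ) T)
    (xbar : EuclideanSpace ℝ (Fin n))
    (hcrit : gradient (f tbar) xbar = 0)
    (hpd : ∀ y : EuclideanSpace ℝ (Fin n), y ≠ 0 →
      0 < ⟪(fderiv ℝ (gradient (f tbar)) xbar) y, y⟫) :
    ∃ that ∈ Set.Ioc tbar T, ∃ u : ℝ → EuclideanSpace ℝ (Fin n),
      ContDiffOn ℝ 2 u (Set.Ico tbar that) ∧
      u tbar = xbar ∧
      (∀ t ∈ Set.Ico tbar that, gradient (f t) (u t) = 0 ∧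
        ∀ y : EuclideanSpace ℝ (Fin n), y ≠ 0 →
          0 < ⟪(fderiv ℝ (gradient (f t)) (u t)) y, y⟫) ∧
      ∃ xhat : EuclideanSpace ℝ (Fin n),
        Tendsto u (nhdsWithin that (Set.Iio that)) (nhds xhat) ∧
        (that = T ∨ (that, xhat) ∈ degenerateCriticalSet T f) := by
  have hsub : Icc tbar T ⊆ Icc 0 T := Icc_subset_Icc_left htbar.1
  obtain ⟨b, hb, u, hu, hua, hcritu, x, hx, hend⟩ :=
    branch_continuation_general (k := 1) htbar.2
      ((hf.mono (prod_mono_left hsub)).of_le (by norm_num))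
      (isBounded_setOf_exists_eq_zero_of_coercive hc₀ fun t ht => hA1 t (hsub ht))
      (fun t ht => isTotallyDisconnected_degenerateZeros_gradient hA3inj (hsub ht)) hcrit hpd
  exact ⟨b, hb, u, hu.of_le (by norm_num), hua, hcritu, x, hx,
    hend.imp_right fun h => mem_degenerateCriticalSet_iff.2 ⟨hsub (Ioc_subset_Icc_self hb), h⟩⟩
end

section
/- Under Assumption 1, let (x_ε)_{ε>0} be a bounded family in ℝⁿ and, for each ε > 0, let u_ε : [0,T] → ℝⁿ be the solution of ε u̇_ε(t) = −∇ₓf(t,u_ε(t)) with u_ε(0) = x_ε. Then ε u̇_ε → 0 strongly in L²([0,T];ℝⁿ) as ε → 0, i.e. ε² ∫₀ᵀ |u̇_ε(t)|² dt → 0 as ε → 0. -/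
open Set Filter Topology intervalIntegral
open scoped RealInnerProductSpace

/-!
Outside a large ball the drift `-∇ₓf(t, ·)` does not point outward, so the trajectories `u_ε` stay
in a ball independent of `ε`. Pairing the equation with `u̇_ε` gives the energy identity
`ε ∫ ‖u̇_ε‖² = f(a, u_ε(a)) - f(b, u_ε(b)) + ∫ ∂ₜf(t, u_ε(t)) dt`, whose right-hand side only
involves values of `f` and `∂ₜf` on a fixed compact set. Hence `ε ∫ ‖u̇_ε‖²` is bounded uniformly
in `ε`, and `ε² ∫ ‖u̇_ε‖² = O(ε)`.
-/

theorem norm_le_of_inner_deriv_right_nonpos {E : Type*} [NormedAddCommGroup E]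
    [InnerProductSpace ℝ E] {v v' : ℝ → E} {a b R : ℝ} (hv : ContinuousOn v (Icc a b))
    (hv' : ∀ t ∈ Ico a b, HasDerivWithinAt v (v' t) (Ici t) t)
    (hinward : ∀ t ∈ Ico a b, R < ‖v t‖ → ⟪v t, v' t⟫ ≤ 0) (ha : ‖v a‖ ≤ R) :
    ∀ t ∈ Icc a b, ‖v t‖ ≤ R := by
  intro t ht
  have hR : 0 ≤ R := (norm_nonneg _).trans ha
  -- The barrier has positive slope, so that a nonpositive derivative is enough to stay below it.
  have sq_le_barrier : ∀ δ > 0, ‖v t‖ ^ 2 ≤ R ^ 2 + δ * (1 + (t - a)) := by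
    intro δ hδ
    refine image_le_of_deriv_right_lt_deriv_boundary (f := fun s => ‖v s‖ ^ 2)
      (f' := fun s => 2 * ⟪v s, v' s⟫) (B := fun s => R ^ 2 + δ * (1 + (s - a)))
      (B' := fun _ => δ) (hv.norm.pow 2) (fun s hs => (hv' s hs).norm_sq) ?_ ?_ ?_ ht
    · have := pow_le_pow_left₀ (norm_nonneg _) ha 2
      simp only [sub_self, add_zero, mul_one]
      linarith
    · intro s
      simpa using ((((hasDerivAt_id s).sub_const a).const_add 1).const_mul δ).const_add (R ^ 2)
    · intro s hs (hsB : ‖v s‖ ^ 2 = _)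
      have hlt : R ^ 2 < ‖v s‖ ^ 2 := by
        have : 0 < δ * (1 + (s - a)) := mul_pos hδ (by linarith [hs.1])
        linarith
      linarith [hinward s hs (lt_of_pow_lt_pow_left₀ 2 (norm_nonneg _) hlt)]
  have barrier_tendsto :
      Tendsto (fun δ : ℝ => R ^ 2 + δ * (1 + (t - a))) (𝓝[>] 0) (𝓝 (R ^ 2)) := by
    have hcont : Continuous fun δ : ℝ => R ^ 2 + δ * (1 + (t - a)) := by fun_prop
    simpa using (hcont.tendsto 0).mono_left nhdsWithin_le_nhds
  have hsq : ‖v t‖ ^ 2 ≤ R ^ 2 :=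
    ge_of_tendsto barrier_tendsto (eventually_mem_nhdsWithin.mono sq_le_barrier)
  exact le_of_sq_le_sq hsq hR

section PartialDerivatives

theorem hasFDerivWithinAt_right_of_uncurry {𝕜 D E F : Type*} [NontriviallyNormedField 𝕜]
    [NormedAddCommGroup D] [NormedSpace 𝕜 D] [NormedAddCommGroup E] [NormedSpace 𝕜 E]
    [NormedAddCommGroup F] [NormedSpace 𝕜 F] {f : D → E → F} {L : D × E →L[𝕜] F}
    {s : Set D} {r : Set E} {t : D} {x : E}
    (h : HasFDerivWithinAt (Function.uncurry f) L (s ×ˢ r) (t, x)) (ht : t ∈ s) :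
    HasFDerivWithinAt (f t) (L ∘L ContinuousLinearMap.inr 𝕜 D E) r x :=
  HasFDerivWithinAt.comp (g := Function.uncurry f) x h
    (hasFDerivAt_prodMk_right t x).hasFDerivWithinAt fun _ hy => ⟨ht, hy⟩

theorem hasDerivWithinAt_left_of_uncurry {𝕜 E F : Type*} [NontriviallyNormedField 𝕜]
    [NormedAddCommGroup E] [NormedSpace 𝕜 E] [NormedAddCommGroup F] [NormedSpace 𝕜 F]
    {f : 𝕜 → E → F} {L : 𝕜 × E →L[𝕜] F} {s : Set 𝕜} {r : Set E} {t : 𝕜} {x : E}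
    (h : HasFDerivWithinAt (Function.uncurry f) L (s ×ˢ r) (t, x)) (hx : x ∈ r) :
    HasDerivWithinAt (fun τ => f τ x) (L (1, 0)) s t :=
  h.comp_hasDerivWithinAt (l := Function.uncurry f) (f := fun τ => (τ, x)) t
    ((hasDerivWithinAt_id t s).prodMk (hasDerivWithinAt_const t s x)) fun _ hτ => ⟨hτ, hx⟩

variable {E : Type*} [NormedAddCommGroup E] [InnerProductSpace ℝ E] {f : ℝ → E → ℝ} {s : Set ℝ}

theorem continuousOn_derivWithin_left_of_contDiffOn_uncurry
    (hf : ContDiffOn ℝ 1 (Function.uncurry f) (s ×ˢ univ)) (hs : UniqueDiffOn ℝ s) :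
    ContinuousOn (fun p : ℝ × E => derivWithin (fun τ => f τ p.2) s p.1) (s ×ˢ univ) := by
  have hcont := hf.continuousOn_fderivWithin (hs.prod uniqueDiffOn_univ) le_rfl
  refine (hcont.clm_apply (continuousOn_const (c := ((1 : ℝ), (0 : E))))).congr fun p hp => ?_
  have hfp := (hf.differentiableOn one_ne_zero p hp).hasFDerivWithinAt
  exact (hasDerivWithinAt_left_of_uncurry hfp hp.2).derivWithin (hs p.1 hp.1)

variable [CompleteSpace E]

theorem continuousOn_gradient_of_contDiffOn_uncurry
    (hf : ContDiffOn ℝ 1 (Function.uncurry f) (s ×ˢ univ)) (hs : UniqueDiffOn ℝ s) :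
    ContinuousOn (fun p : ℝ × E => gradient (f p.1) p.2) (s ×ˢ univ) := by
  have hcont := hf.continuousOn_fderivWithin (hs.prod uniqueDiffOn_univ) le_rfl
  refine (InnerProductSpace.toDual ℝ E).symm.continuous.comp_continuousOn <|
    (hcont.clm_comp (continuousOn_const
      (c := ContinuousLinearMap.inr ℝ ℝ E))).congr fun p hp => ?_
  have hfp := (hf.differentiableOn one_ne_zero p hp).hasFDerivWithinAt
  exact (hasFDerivWithinAt_right_of_uncurry hfp hp.1).hasFDerivAt_of_univ.fderiv

theorem hasDerivWithinAt_uncurry_comp {u : ℝ → E} {v : E} {t : ℝ}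
    (hf : DifferentiableWithinAt ℝ (Function.uncurry f) (s ×ˢ univ) (t, u t))
    (hs : UniqueDiffWithinAt ℝ s t) (ht : t ∈ s) (hu : HasDerivWithinAt u v s t) :
    HasDerivWithinAt (fun τ => f τ (u τ))
      (derivWithin (fun τ => f τ (u t)) s t + ⟪gradient (f t) (u t), v⟫) s t := by
  have hL := hf.hasFDerivWithinAt
  set L := fderivWithin ℝ (Function.uncurry f) (s ×ˢ univ) (t, u t)
  have htime : derivWithin (fun τ => f τ (u t)) s t = L (1, 0) :=
    (hasDerivWithinAt_left_of_uncurry hL (mem_univ _)).derivWithin hs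
  have hspace : ⟪gradient (f t) (u t), v⟫ = L (0, v) := by
    rw [← InnerProductSpace.toDual_apply_apply, toDual_gradient,
      (hasFDerivWithinAt_right_of_uncurry hL ht).hasFDerivAt_of_univ.fderiv]
    rfl
  have hsplit : L (1, v) = L (1, 0) + L (0, v) := by simp [← map_add]
  rw [htime, hspace, ← hsplit]
  exact hL.comp_hasDerivWithinAt (l := Function.uncurry f) (f := fun τ => (τ, u τ)) t
    ((hasDerivWithinAt_id t s).prodMk hu) fun τ hτ => ⟨hτ, mem_univ (u τ)⟩

end PartialDerivatives

/-- `u`, with velocity `u'`, solves the singularly perturbed gradient system `ε u̇ = -∇ₓf(t, u)` on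
`[a, b]`. Derivatives at the endpoints are one-sided. -/
def IsGradientFlowOn {E : Type*} [NormedAddCommGroup E] [InnerProductSpace ℝ E] [CompleteSpace E]
    (f : ℝ → E → ℝ) (ε a b : ℝ) (u u' : ℝ → E) : Prop :=
  ∀ t ∈ Icc a b, HasDerivWithinAt u (u' t) (Icc a b) t ∧ ε • u' t = -gradient (f t) (u t)

namespace IsGradientFlowOn

variable {E : Type*} [NormedAddCommGroup E] [InnerProductSpace ℝ E] [CompleteSpace E]
  {f : ℝ → E → ℝ} {ε a b : ℝ} {u u' : ℝ → E}

theorem continuousOn (hu : IsGradientFlowOn f ε a b u u') : ContinuousOn u (Icc a b) :=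
  HasDerivWithinAt.continuousOn fun t ht => (hu t ht).1

theorem gradient_eq (hu : IsGradientFlowOn f ε a b u u') {t : ℝ} (ht : t ∈ Icc a b) :
    gradient (f t) (u t) = -(ε • u' t) := by
  rw [(hu t ht).2, neg_neg]

theorem norm_le (hu : IsGradientFlowOn f ε a b u u') (hε : 0 < ε) {R : ℝ}
    (hout : ∀ t ∈ Icc a b, ∀ y, R < ‖y‖ → 0 ≤ ⟪gradient (f t) y, y⟫) (ha : ‖u a‖ ≤ R) :
    ∀ t ∈ Icc a b, ‖u t‖ ≤ R := by
  refine norm_le_of_inner_deriv_right_nonpos (v' := u') hu.continuousOn (fun t ht => ?_)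
    (fun t ht hRt => ?_) ha
  · exact (hu t (Ico_subset_Icc_self ht)).1.mono_of_mem_nhdsWithin (Icc_mem_nhdsGE_of_mem ht)
  · have h := hout t (Ico_subset_Icc_self ht) (u t) hRt
    rw [hu.gradient_eq (Ico_subset_Icc_self ht), inner_neg_left, real_inner_smul_left,
      real_inner_comm, neg_nonneg] at h
    exact nonpos_of_mul_nonpos_right h hε

theorem continuousOn_velocity (hu : IsGradientFlowOn f ε a b u u') (hε : ε ≠ 0) (hab : a < b)
    (hf : ContDiffOn ℝ 1 (Function.uncurry f) (Icc a b ×ˢ univ)) :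
    ContinuousOn u' (Icc a b) := by
  have hgrad : ContinuousOn (fun t => gradient (f t) (u t)) (Icc a b) :=
    (continuousOn_gradient_of_contDiffOn_uncurry hf (uniqueDiffOn_Icc hab)).comp
      (continuousOn_id.prodMk hu.continuousOn) fun t ht => ⟨ht, mem_univ (u t)⟩
  refine (hgrad.neg.const_smul ε⁻¹).congr fun t ht => ?_
  rw [Pi.smul_apply, Pi.neg_apply, ← (hu t ht).2, inv_smul_smul₀ hε]

theorem hasDerivWithinAt_energy (hu : IsGradientFlowOn f ε a b u u') (hab : a < b)
    (hf : ContDiffOn ℝ 1 (Function.uncurry f) (Icc a b ×ˢ univ)) {t : ℝ} (ht : t ∈ Icc a b) :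
    HasDerivWithinAt (fun τ => f τ (u τ))
      (derivWithin (fun τ => f τ (u t)) (Icc a b) t - ε * ‖u' t‖ ^ 2) (Icc a b) t := by
  have h := hasDerivWithinAt_uncurry_comp
    (hf.differentiableOn one_ne_zero (t, u t) ⟨ht, mem_univ _⟩)
    (uniqueDiffOn_Icc hab t ht) ht (hu t ht).1
  rwa [hu.gradient_eq ht, inner_neg_left, real_inner_smul_left, real_inner_self_eq_norm_sq,
    ← sub_eq_add_neg] at h

theorem energy_identity (hu : IsGradientFlowOn f ε a b u u') (hε : ε ≠ 0) (hab : a < b)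
    (hf : ContDiffOn ℝ 1 (Function.uncurry f) (Icc a b ×ˢ univ)) :
    ε * ∫ t in a..b, ‖u' t‖ ^ 2 =
      f a (u a) - f b (u b) + ∫ t in a..b, derivWithin (fun τ => f τ (u t)) (Icc a b) t := by
  have henergy := fun t (ht : t ∈ Icc a b) => hu.hasDerivWithinAt_energy hab hf ht
  have hkinetic : IntervalIntegrable (fun t => ε * ‖u' t‖ ^ 2) MeasureTheory.volume a b :=
    (continuousOn_const.mul
      ((hu.continuousOn_velocity hε hab hf).norm.pow 2)).intervalIntegrable_of_Icc hab.le
  have htime : IntervalIntegrable (fun t => derivWithin (fun τ => f τ (u t)) (Icc a b) t)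
      MeasureTheory.volume a b :=
    ((continuousOn_derivWithin_left_of_contDiffOn_uncurry hf (uniqueDiffOn_Icc hab)).comp
      (continuousOn_id.prodMk hu.continuousOn)
      fun t ht => ⟨ht, mem_univ (u t)⟩).intervalIntegrable_of_Icc hab.le
  have hftc := integral_eq_sub_of_hasDeriv_right_of_le hab.le
    (HasDerivWithinAt.continuousOn henergy)
    (fun t ht => (henergy t (Ioo_subset_Icc_self ht)).mono_of_mem_nhdsWithin
      (Icc_mem_nhdsGT_of_mem (Ioo_subset_Ico_self ht)))
    (htime.sub hkinetic)
  rw [integral_sub htime hkinetic, integral_const_mul] at hftc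
  linarith

end IsGradientFlowOn

theorem exists_forall_isGradientFlowOn_mul_integral_sq_le {E : Type*} [NormedAddCommGroup E]
    [InnerProductSpace ℝ E] [ProperSpace E] {f : ℝ → E → ℝ} {a b : ℝ} (hab : a < b)
    (hf : ContDiffOn ℝ 1 (Function.uncurry f) (Icc a b ×ˢ univ)) (R : ℝ) :
    ∃ M, ∀ (ε : ℝ) (u u' : ℝ → E), ε ≠ 0 → IsGradientFlowOn f ε a b u u' →
      (∀ t ∈ Icc a b, ‖u t‖ ≤ R) → ε * ∫ t in a..b, ‖u' t‖ ^ 2 ≤ M := by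
  let K : Set (ℝ × E) := Icc a b ×ˢ Metric.closedBall 0 R
  have hK : IsCompact K := isCompact_Icc.prod (isCompact_closedBall 0 R)
  have hKsub : K ⊆ Icc a b ×ˢ univ := prod_mono_right (subset_univ _)
  obtain ⟨M₀, hM₀⟩ := hK.exists_bound_of_continuousOn (hf.continuousOn.mono hKsub)
  obtain ⟨M₁, hM₁⟩ := hK.exists_bound_of_continuousOn
    ((continuousOn_derivWithin_left_of_contDiffOn_uncurry hf (uniqueDiffOn_Icc hab)).mono hKsub)
  refine ⟨2 * M₀ + M₁ * (b - a), fun ε u u' hε hu hR => ?_⟩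
  have hmem : ∀ t ∈ Icc a b, (t, u t) ∈ K := fun t ht =>
    ⟨ht, mem_closedBall_zero_iff.2 (hR t ht)⟩
  have hfa : f a (u a) ≤ M₀ := (le_abs_self _).trans (hM₀ _ (hmem a (left_mem_Icc.2 hab.le)))
  have hfb : -f b (u b) ≤ M₀ := (neg_le_abs _).trans (hM₀ _ (hmem b (right_mem_Icc.2 hab.le)))
  have htime : ∫ t in a..b, derivWithin (fun τ => f τ (u t)) (Icc a b) t ≤ M₁ * (b - a) := by
    refine (le_abs_self _).trans ?_
    rw [← abs_of_pos (sub_pos.2 hab)]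
    refine norm_integral_le_of_norm_le_const fun t ht => hM₁ _ (hmem t ?_)
    rw [uIoc_of_le hab.le] at ht
    exact Ioc_subset_Icc_self ht
  rw [hu.energy_identity hε hab hf]
  linarith

theorem eps_velocity_tendsto_zero_L2_general {E : Type*} [NormedAddCommGroup E]
    [InnerProductSpace ℝ E] [ProperSpace E]
    {f : ℝ → E → ℝ} {a b C R : ℝ} (hab : a < b)
    (hf : ContDiffOn ℝ 1 (Function.uncurry f) (Icc a b ×ˢ univ))
    (hout : ∀ t ∈ Icc a b, ∀ y, R < ‖y‖ → 0 ≤ ⟪gradient (f t) y, y⟫)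
    {u u' : ℝ → ℝ → E} (hinit : ∀ ε > 0, ‖u ε a‖ ≤ C)
    (hu : ∀ ε > 0, IsGradientFlowOn f ε a b (u ε) (u' ε)) :
    Tendsto (fun ε => ε ^ 2 * ∫ t in a..b, ‖u' ε t‖ ^ 2) (𝓝[>] 0) (𝓝 0) := by
  obtain ⟨M, hM⟩ := exists_forall_isGradientFlowOn_mul_integral_sq_le hab hf (max C R)
  have henergy : ∀ ε > 0, ε * ∫ t in a..b, ‖u' ε t‖ ^ 2 ≤ M := fun ε hε =>
    hM ε (u ε) (u' ε) hε.ne' (hu ε hε) <| (hu ε hε).norm_le hε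
      (fun t ht y hy => hout t ht y ((le_max_right C R).trans_lt hy))
      ((hinit ε hε).trans (le_max_left C R))
  have hlim : Tendsto (fun ε : ℝ => ε * M) (𝓝[>] 0) (𝓝 0) := by
    simpa using ((continuous_mul_const M).tendsto 0).mono_left nhdsWithin_le_nhds
  refine squeeze_zero' ?_ ?_ hlim
  · exact .of_forall fun ε =>
      mul_nonneg (sq_nonneg ε) (integral_nonneg hab.le fun t _ => sq_nonneg _)
  · filter_upwards [self_mem_nhdsWithin] with ε hε
    rw [pow_two, mul_assoc]
    exact mul_le_mul_of_nonneg_left (henergy ε hε) (le_of_lt hε)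

theorem mul_sq_sub_nonneg_of_sqrt_div_le {a c r : ℝ} (hc : 0 < c) (hr : √(a / c) ≤ r) :
    0 ≤ c * r ^ 2 - a := by
  have h := (div_le_iff₀' hc).1 (Real.sqrt_le_iff.1 hr).2
  linarith

/-- for solutions `u_ε` of `ε u̇_ε = −∇ₓf(t,u_ε)` with bounded initial
data, `ε u̇_ε → 0` strongly in `L²([0,T])` as `ε → 0`, i.e.
`ε² ∫₀ᵀ ‖u̇_ε‖² dt → 0`. -/
theorem eps_velocity_tendsto_zero_L2
    {n : ℕ} (hn : 1 ≤ n) {T : ℝ} (hT : 0 < T)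
    (f : ℝ → EuclideanSpace ℝ (Fin n) → ℝ)
    (hf : ContDiffOn ℝ 3 (Function.uncurry f)
      (Set.Icc 0 T ×ˢ (Set.univ : Set (EuclideanSpace ℝ (Fin n)))))
    {a₀ c₀ : ℝ} (ha₀ : 0 ≤ a₀) (hc₀ : 0 < c₀)
    (hA1 : ∀ t ∈ Set.Icc (0:ℝ) T, ∀ x : EuclideanSpace ℝ (Fin n),
      ⟪gradient (f t) x, x⟫ ≥ c₀ * ‖x‖ ^ 2 - a₀)
    (x : ℝ → EuclideanSpace ℝ (Fin n))
    (hxbdd : ∃ C : ℝ, ∀ ε : ℝ, 0 < ε → ‖x ε‖ ≤ C)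
    (u u' : ℝ → ℝ → EuclideanSpace ℝ (Fin n))
    (hinit : ∀ ε : ℝ, 0 < ε → u ε 0 = x ε)
    (hu' : ∀ ε : ℝ, 0 < ε → ContinuousOn (u' ε) (Set.Icc 0 T))
    (hode : ∀ ε : ℝ, 0 < ε → ∀ t ∈ Set.Icc (0:ℝ) T,
      HasDerivWithinAt (u ε) (u' ε t) (Set.Icc 0 T) t ∧
      ε • u' ε t = -(gradient (f t) (u ε t))) :
    Filter.Tendsto (fun ε : ℝ => ε ^ 2 * ∫ t in (0:ℝ)..T, ‖u' ε t‖ ^ 2)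
      (nhdsWithin 0 (Set.Ioi 0)) (nhds 0) := by
  obtain ⟨C, hC⟩ := hxbdd
  refine eps_velocity_tendsto_zero_L2_general (R := √(a₀ / c₀)) hT (hf.of_le (by norm_num))
    (fun t ht y hy => ?_) (fun ε hε => hinit ε hε ▸ hC ε hε) hode
  exact (mul_sq_sub_nonneg_of_sqrt_div_le hc₀ hy.le).trans (hA1 t ht y)
end

section
/- Let 0 < τ ≤ T, let u : [0,τ] → ℝⁿ be of class C¹ with ∇ₓf(t,u(t)) = 0 for every t ∈ [0,τ], and let α, β, δ₀ > 0 be constants such that ∇²ₓf(t,x)y·y ≥ α|y|² for all t ∈ [0,τ], all y ∈ ℝⁿ and all x with |x − u(t)| < δ₀, and |u̇(t)|² ≤ β for all t ∈ [0,τ]. Let 0 < ε < 2α and let u_ε be a C¹ solution of ε u̇_ε(t) = −∇ₓf(t,u_ε(t)) on [0,τ]. If t* ∈ (0,τ] is such that |u_ε(t) − u(t)| < δ₀ for all t ∈ [0,t*), then for every t ∈ [0,t*) one has |u_ε(t) − u(t)|² ≤ (|u_ε(0) − u(0)|² − εβ/(2α−ε)) e^{−(2α/ε − 1)t} + εβ/(2α−ε).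 -/
open Set Filter Topology
open scoped RealInnerProductSpace

/-!
The Hessian bound makes `∇ₓf(t, ·)` strongly monotone around its zero `u t`, that is
`⟪∇ₓf(t, u_ε), w⟫ ≥ α ‖w‖²` for `w = u_ε - u`. Differentiating `‖w‖²` and absorbing the drift of
the branch by `-2 ⟪w, u̇⟫ ≤ ‖w‖² + ‖u̇‖²` gives `(‖w‖²)' ≤ -(2α/ε - 1) ‖w‖² + β`, and Grönwall's
inequality concludes.
-/

theorem le_gronwallBound_of_deriv_right_le {φ φ' : ℝ → ℝ} {K c a b : ℝ}
    (hφ : ContinuousOn φ (Icc a b)) (hφ' : ∀ t ∈ Ico a b, HasDerivWithinAt φ (φ' t) (Ici t) t)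
    (bound : ∀ t ∈ Ico a b, φ' t ≤ K * φ t + c) :
    ∀ t ∈ Icc a b, φ t ≤ gronwallBound (φ a) K c (t - a) :=
  le_gronwallBound_of_liminf_deriv_right_le hφ
    (fun t ht _ hr => (hφ' t ht).liminf_right_slope_le hr) le_rfl bound

theorem gronwallBound_neg {δ k c : ℝ} (hk : k ≠ 0) (t : ℝ) :
    gronwallBound δ (-k) c t = (δ - c / k) * Real.exp (-k * t) + c / k := by
  rw [gronwallBound_of_K_ne_0 (neg_ne_zero.mpr hk), div_neg]
  ring

theorem differentiable_gradient {E : Type*} [NormedAddCommGroup E] [InnerProductSpace ℝ E]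
    [CompleteSpace E] {f : E → ℝ} (hf : ContDiff ℝ 2 f) : Differentiable ℝ (gradient f) :=
  (InnerProductSpace.toDual ℝ E).symm.toContinuousLinearEquiv.differentiable.comp
    ((hf.fderiv_right (m := 1) (by norm_num)).differentiable one_ne_zero)

theorem contDiff_of_contDiffOn_uncurry {𝕜 X E G : Type*} [NontriviallyNormedField 𝕜]
    [NormedAddCommGroup X] [NormedSpace 𝕜 X] [NormedAddCommGroup E] [NormedSpace 𝕜 E]
    [NormedAddCommGroup G] [NormedSpace 𝕜 G] {m : WithTop ℕ∞} {s : Set X} {f : X → E → G}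
    (hf : ContDiffOn 𝕜 m (Function.uncurry f) (s ×ˢ univ)) {t : X} (ht : t ∈ s) :
    ContDiff 𝕜 m (f t) :=
  hf.comp_contDiff (contDiff_const.prodMk contDiff_id) fun x => ⟨ht, mem_univ x⟩

section InnerProductSpace

variable {E : Type*} [NormedAddCommGroup E] [InnerProductSpace ℝ E]

theorem mul_norm_sq_le_inner_sub_of_coercive_fderiv {s : Set E} (hs : Convex ℝ s) {F : E → E}
    {F' : E → E →L[ℝ] E} {α : ℝ} (hF : ∀ z ∈ s, HasFDerivWithinAt F (F' z) s z)
    (hF' : ∀ z ∈ s, ∀ w, α * ‖w‖ ^ 2 ≤ ⟪F' z w, w⟫) {x y : E} (hx : x ∈ s) (hy : y ∈ s) :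
    α * ‖y - x‖ ^ 2 ≤ ⟪F y - F x, y - x⟫ := by
  obtain ⟨z, hz, hmean⟩ := domain_mvt
    (fun z hz => (innerSL ℝ (y - x)).hasFDerivAt.comp_hasFDerivWithinAt z (hF z hz)) hs hx hy
  have hmean : ⟪F y - F x, y - x⟫ = ⟪F' z (y - x), y - x⟫ := by
    rw [real_inner_comm, inner_sub_right, real_inner_comm (y - x) (F' z _)]
    exact hmean
  exact hmean ▸ hF' z (hs.segment_subset hx hy hz) (y - x)

theorem two_mul_inner_neg_inv_smul_sub_le {α β ε : ℝ} (hε : 0 < ε) {w g v : E}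
    (hg : α * ‖w‖ ^ 2 ≤ ⟪g, w⟫) (hv : ‖v‖ ^ 2 ≤ β) :
    2 * ⟪w, -(ε⁻¹ • g) - v⟫ ≤ -(2 * α / ε - 1) * ‖w‖ ^ 2 + β := by
  have dissipation : ε⁻¹ * (α * ‖w‖ ^ 2) ≤ ε⁻¹ * ⟪g, w⟫ := by gcongr
  have young : -(2 * ⟪w, v⟫) ≤ ‖w‖ ^ 2 + ‖v‖ ^ 2 := by
    linarith [norm_add_sq_real w v, sq_nonneg ‖w + v‖]
  calc 2 * ⟪w, -(ε⁻¹ • g) - v⟫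
      = -2 * (ε⁻¹ * ⟪g, w⟫) - 2 * ⟪w, v⟫ := by
        rw [inner_sub_right, inner_neg_right, real_inner_smul_right, real_inner_comm]
        ring
    _ ≤ -2 * (ε⁻¹ * (α * ‖w‖ ^ 2)) + (‖w‖ ^ 2 + β) := by linarith
    _ = -(2 * α / ε - 1) * ‖w‖ ^ 2 + β := by ring

theorem norm_sub_sq_le_gronwallBound {u u' v g : ℝ → E} {a b α β ε : ℝ} (hε : 0 < ε)
    (hu : ContinuousOn u (Icc a b)) (hv : ContinuousOn v (Icc a b))
    (hu' : ∀ t ∈ Ico a b, HasDerivWithinAt u (u' t) (Ici t) t)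
    (hv' : ∀ t ∈ Ico a b, HasDerivWithinAt v (-(ε⁻¹ • g t)) (Ici t) t)
    (hg : ∀ t ∈ Ico a b, α * ‖v t - u t‖ ^ 2 ≤ ⟪g t, v t - u t⟫)
    (hβ : ∀ t ∈ Ico a b, ‖u' t‖ ^ 2 ≤ β) :
    ∀ t ∈ Icc a b,
      ‖v t - u t‖ ^ 2 ≤ gronwallBound (‖v a - u a‖ ^ 2) (-(2 * α / ε - 1)) β (t - a) :=
  le_gronwallBound_of_deriv_right_le ((hv.sub hu).norm.pow 2)
    (fun t ht => ((hv' t ht).sub (hu' t ht)).norm_sq)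
    fun t ht => two_mul_inner_neg_inv_smul_sub_le hε (hg t ht) (hβ t ht)

theorem gronwall_estimate_along_branch_general {F : ℝ → E → E} {F' : ℝ → E → E →L[ℝ] E}
    {u u' uε : ℝ → E} {τ α β δ ε : ℝ}
    (hu : ∀ t ∈ Ico 0 τ, HasDerivWithinAt u (u' t) (Ico 0 τ) t)
    (hzero : ∀ t ∈ Ico 0 τ, F t (u t) = 0)
    (hF : ∀ t ∈ Ico 0 τ, ∀ x ∈ Metric.ball (u t) δ, HasFDerivAt (F t) (F' t x) x)
    (hF' : ∀ t ∈ Ico 0 τ, ∀ x ∈ Metric.ball (u t) δ, ∀ y, α * ‖y‖ ^ 2 ≤ ⟪F' t x y, y⟫)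
    (hβ : ∀ t ∈ Ico 0 τ, ‖u' t‖ ^ 2 ≤ β) (hε : 0 < ε) (hεα : ε ≠ 2 * α)
    (hode : ∀ t ∈ Ico 0 τ, HasDerivWithinAt uε (-(ε⁻¹ • F t (uε t))) (Ico 0 τ) t)
    (htube : ∀ t ∈ Ico 0 τ, uε t ∈ Metric.ball (u t) δ) :
    ∀ t ∈ Ico 0 τ,
      ‖uε t - u t‖ ^ 2 ≤
        (‖uε 0 - u 0‖ ^ 2 - ε * β / (2 * α - ε)) * Real.exp (-(2 * α / ε - 1) * t) +
          ε * β / (2 * α - ε) := by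
  intro t ht
  have hIcc : Icc 0 t ⊆ Ico 0 τ := Icc_subset_Ico_right ht.2
  have hIco : Ico 0 t ⊆ Ico 0 τ := Ico_subset_Icc_self.trans hIcc
  have hright {s : ℝ} (hs : s ∈ Ico 0 t) : Ico 0 τ ∈ 𝓝[≥] s := Ico_mem_nhdsGE_of_mem (hIco hs)
  have hmono (s : ℝ) (hs : s ∈ Ico 0 τ) :
      α * ‖uε s - u s‖ ^ 2 ≤ ⟪F s (uε s), uε s - u s⟫ := by
    have hcenter : u s ∈ Metric.ball (u s) δ :=
      Metric.mem_ball_self (Metric.pos_of_mem_ball (htube s hs))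
    simpa only [hzero s hs, sub_zero] using
      mul_norm_sq_le_inner_sub_of_coercive_fderiv (convex_ball (u s) δ)
        (fun x hx => (hF s hs x hx).hasFDerivWithinAt) (hF' s hs) hcenter (htube s hs)
  have hgronwall := norm_sub_sq_le_gronwallBound hε
    (fun s hs => (hu s (hIcc hs)).continuousWithinAt.mono hIcc)
    (fun s hs => (hode s (hIcc hs)).continuousWithinAt.mono hIcc)
    (fun s hs => (hu s (hIco hs)).mono_of_mem_nhdsWithin (hright hs))
    (fun s hs => (hode s (hIco hs)).mono_of_mem_nhdsWithin (hright hs))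
    (fun s hs => hmono s (hIco hs)) (fun s hs => hβ s (hIco hs)) t (right_mem_Icc.mpr ht.1)
  have hgap : 2 * α - ε ≠ 0 := sub_ne_zero.mpr hεα.symm
  have hrate : 2 * α / ε - 1 = (2 * α - ε) / ε := by field_simp
  have hlimit : β / (2 * α / ε - 1) = ε * β / (2 * α - ε) := by
    rw [hrate, div_div_eq_mul_div, mul_comm]
  rwa [sub_zero, gronwallBound_neg (hrate ▸ div_ne_zero hgap hε.ne'), hlimit] at hgronwall

end InnerProductSpace

/-- the quantitative Gronwall-type estimate
`‖u_ε(t) − u(t)‖² ≤ (‖u_ε(0) − u(0)‖² − εβ/(2α−ε)) e^{−(2α/ε − 1)t} + εβ/(2α−ε)`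
as long as `u_ε` stays in the `δ₀`-tube around the equilibrium branch `u`. -/
theorem gronwall_estimate_along_branch
    {n : ℕ} (hn : 1 ≤ n) {T : ℝ} (hT : 0 < T)
    (f : ℝ → EuclideanSpace ℝ (Fin n) → ℝ)
    (hf : ContDiffOn ℝ 3 (Function.uncurry f)
      (Set.Icc 0 T ×ˢ (Set.univ : Set (EuclideanSpace ℝ (Fin n)))))
    (τ : ℝ) (hτ : 0 < τ) (hτT : τ ≤ T)
    (u u' : ℝ → EuclideanSpace ℝ (Fin n))
    (hu : ∀ t ∈ Set.Icc (0:ℝ) τ, HasDerivWithinAt u (u' t) (Set.Icc 0 τ) t)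
    (hu' : ContinuousOn u' (Set.Icc 0 τ))
    (hcrit : ∀ t ∈ Set.Icc (0:ℝ) τ, gradient (f t) (u t) = 0)
    (α β δ₀ : ℝ) (hα : 0 < α) (hβ : 0 < β) (hδ₀ : 0 < δ₀)
    (hhess : ∀ t ∈ Set.Icc (0:ℝ) τ, ∀ x : EuclideanSpace ℝ (Fin n),
      ‖x - u t‖ < δ₀ → ∀ y : EuclideanSpace ℝ (Fin n),
        ⟪(fderiv ℝ (gradient (f t)) x) y, y⟫ ≥ α * ‖y‖ ^ 2)
    (hu'bd : ∀ t ∈ Set.Icc (0:ℝ) τ, ‖u' t‖ ^ 2 ≤ β)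
    (ε : ℝ) (hε : 0 < ε) (hε2α : ε < 2 * α)
    (uε : ℝ → EuclideanSpace ℝ (Fin n))
    (hode : ∀ t ∈ Set.Icc (0:ℝ) τ,
      HasDerivWithinAt uε (-(ε⁻¹ • gradient (f t) (uε t))) (Set.Icc 0 τ) t)
    (tstar : ℝ) (htstar : tstar ∈ Set.Ioc 0 τ)
    (htube : ∀ t ∈ Set.Ico (0:ℝ) tstar, ‖uε t - u t‖ < δ₀) :
    ∀ t ∈ Set.Ico (0:ℝ) tstar,
      ‖uε t - u t‖ ^ 2 ≤
        (‖uε 0 - u 0‖ ^ 2 - ε * β / (2 * α - ε)) * Real.exp (-(2 * α / ε - 1) * t) +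
          ε * β / (2 * α - ε) := by
  have hsub : Ico 0 tstar ⊆ Icc 0 τ := Ico_subset_Icc_self.trans (Icc_subset_Icc_right htstar.2)
  have hgrad (t : ℝ) (ht : t ∈ Icc 0 τ) : Differentiable ℝ (gradient (f t)) :=
    differentiable_gradient
      ((contDiff_of_contDiffOn_uncurry hf ⟨ht.1, ht.2.trans hτT⟩).of_le (by norm_num))
  exact gronwall_estimate_along_branch_general
    (fun t ht => (hu t (hsub ht)).mono hsub) (fun t ht => hcrit t (hsub ht))
    (fun t ht x _ => (hgrad t (hsub ht) x).hasFDerivAt)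
    (fun t ht x hx => hhess t (hsub ht) x (mem_ball_iff_norm.mp hx))
    (fun t ht => hu'bd t (hsub ht)) hε hε2α.ne (fun t ht => (hode t (hsub ht)).mono hsub)
    fun t ht => mem_ball_iff_norm.mpr (htube t ht)
end

section
/- Under Assumption 1 and the stated setup, for every ε sufficiently small the set {t ∈ [τ₁,T] : |u_ε(t) − x₁| ≥ δ₁} is nonempty, and the exit times t_ε^{δ₁} := inf{t ∈ [τ₁,T] : |u_ε(t) − x₁| ≥ δ₁} satisfy t_ε^{δ₁} → t₁ as ε → 0. -/
open Set Filter Topology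
open scoped RealInnerProductSpace

/-!
Up to any time `b < t₁` the branch `u` consists of nondegenerate minima, so by compactness
`⟪∇ₓf(t, u t + z), z⟫` is bounded below by a positive constant `m` on the sphere `‖z‖ = r`, for each
small `r`. There `½ d/dt ‖u_ε - u‖² ≤ r sup ‖u'‖ - m / ε < 0` for small `ε`, so `u_ε` stays in the
tube of radius `r` around `u`: it cannot leave the ball around `x₁` before `t₁`.

Right after `t₁` there is no critical point left in the ball. As long as `u_ε` stays in it,
`d/dt f(t, u_ε) = ∂ₜf - ε⁻¹ ‖∇ₓf‖²` tends to `-∞` uniformly while `f` remains bounded, so `u_ε` must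
leave the ball within any prescribed time.
-/

section OrderedTopology

variable {ι α : Type*} [ConditionallyCompleteLinearOrder α] [TopologicalSpace α] [OrderTopology α]
  [DenselyOrdered α] [NoMinOrder α] [NoMaxOrder α]

lemma tendsto_sInf_of_eventually_bounds {l : Filter ι} {S : ι → Set α} {c : α}
    (hlower : ∀ a < c, ∀ᶠ i in l, a ∈ lowerBounds (S i))
    (hupper : ∀ b > c, ∀ᶠ i in l, ∃ t ∈ S i, t < b) :
    Tendsto (fun i => sInf (S i)) l (𝓝 c) := by
  obtain ⟨a₀, ha₀⟩ := exists_lt c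
  obtain ⟨b₀, hb₀⟩ := exists_gt c
  refine tendsto_order.2 ⟨fun a ha => ?_, fun b hb => ?_⟩
  · obtain ⟨a', haa', ha'c⟩ := exists_between ha
    filter_upwards [hlower a' ha'c, hupper b₀ hb₀] with i hi ⟨t, ht, _⟩
    exact haa'.trans_le (le_csInf ⟨t, ht⟩ hi)
  · filter_upwards [hlower a₀ ha₀, hupper b hb] with i hi ⟨t, ht, htb⟩
    exact (csInf_le ⟨a₀, hi⟩ ht).trans_lt htb

end OrderedTopology

section Tube

variable {P E F : Type*} [PseudoMetricSpace P] [PseudoMetricSpace E] [TopologicalSpace F]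

lemma exists_forall_mem_ball_mem_open {s : Set P} {A : P × E → F} {u : P → E} {U : Set F}
    (hs : IsCompact s) (hA : ContinuousOn A (s ×ˢ univ)) (hu : ContinuousOn u s) (hU : IsOpen U)
    (hgraph : ∀ t ∈ s, A (t, u t) ∈ U) :
    ∃ ρ > 0, ∀ t ∈ s, ∀ x ∈ Metric.ball (u t) ρ, A (t, x) ∈ U := by
  obtain ⟨V, hV, hpre⟩ := continuousOn_iff'.1 hA U hU
  have hiff : ∀ t ∈ s, ∀ x, A (t, x) ∈ U ↔ (t, x) ∈ V := fun t ht x => by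
    simpa [ht] using Set.ext_iff.1 hpre (t, x)
  have hsubset : (fun t => (t, u t)) '' s ⊆ V :=
    image_subset_iff.2 fun t ht => (hiff t ht (u t)).1 (hgraph t ht)
  obtain ⟨ρ, hρ, hthick⟩ := (hs.image_of_continuousOn
    (continuousOn_id.prodMk hu)).exists_thickening_subset_open hV hsubset
  refine ⟨ρ, hρ, fun t ht x hx => (hiff t ht x).2 (hthick ?_)⟩
  exact Metric.mem_thickening_iff.2
    ⟨(t, u t), mem_image_of_mem _ ht, by simpa [Prod.dist_eq, hρ] using hx⟩

end Tube

section PartialDerivative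

variable {𝕜 P E F : Type*} [NontriviallyNormedField 𝕜] [NormedAddCommGroup P] [NormedSpace 𝕜 P]
  [NormedAddCommGroup E] [NormedSpace 𝕜 E] [NormedAddCommGroup F] [NormedSpace 𝕜 F]
  {f : P → E → F} {s : Set P}

lemma contDiffOn_fderiv_of_uncurry {m n : WithTop ℕ∞}
    (hf : ContDiffOn 𝕜 n (Function.uncurry f) (s ×ˢ univ)) (hmn : m + 1 ≤ n) :
    ContDiffOn 𝕜 m (fun p : P × E => fderiv 𝕜 (f p.1) p.2) (s ×ˢ univ) := by
  intro p hp
  have hf' : ContDiffWithinAt 𝕜 n (Function.uncurry fun q : P × E => f q.1)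
      ((s ×ˢ univ) ×ˢ univ) (p, p.2) :=
    (hf p hp).comp (p, p.2) (g := Function.uncurry f)
      (f := fun q : (P × E) × E => (q.1.1, q.2)) (by fun_prop) fun q hq => ⟨hq.1.1, hq.2⟩
  simpa only [fderivWithin_univ] using
    hf'.fderivWithin contDiffWithinAt_snd uniqueDiffOn_univ hmn hp fun _ _ => mem_univ _

lemma hasFDerivAt_of_differentiableWithinAt_uncurry {t : P} {x : E}
    (hf : DifferentiableWithinAt 𝕜 (Function.uncurry f) (s ×ˢ univ) (t, x)) (ht : t ∈ s) :
    HasFDerivAt (f t) ((fderivWithin 𝕜 (Function.uncurry f) (s ×ˢ univ) (t, x)).comp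
      (ContinuousLinearMap.inr 𝕜 P E)) x :=
  hasFDerivWithinAt_univ.1 <| hf.hasFDerivWithinAt.comp x
    (hasFDerivAt_prodMk_right t x).hasFDerivWithinAt fun _ _ => ⟨ht, mem_univ _⟩

end PartialDerivative

section InnerProductSpace

variable {E : Type*} [NormedAddCommGroup E] [InnerProductSpace ℝ E]

lemma contDiffOn_gradient_of_uncurry [CompleteSpace E] {P : Type*} [NormedAddCommGroup P]
    [NormedSpace ℝ P] {f : P → E → ℝ} {s : Set P} {m n : WithTop ℕ∞}
    (hf : ContDiffOn ℝ n (Function.uncurry f) (s ×ˢ univ)) (hmn : m + 1 ≤ n) :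
    ContDiffOn ℝ m (Function.uncurry fun t => gradient (f t)) (s ×ˢ univ) :=
  (InnerProductSpace.toDual ℝ E).symm.contDiff.comp_contDiffOn
    (contDiffOn_fderiv_of_uncurry hf hmn)

lemma inner_sub_sub_pos_of_fderiv_pos {g : E → E} {x y : E}
    (hg : ∀ z ∈ segment ℝ x y, DifferentiableAt ℝ g z)
    (hpos : ∀ z ∈ segment ℝ x y, 0 < ⟪fderiv ℝ g z (y - x), y - x⟫) :
    0 < ⟪g y - g x, y - x⟫ := by
  obtain ⟨z, hz, hmvt⟩ := domain_mvt (f := fun z => ⟪y - x, g z⟫)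
    (fun z hz => ((innerSL ℝ (y - x)).hasFDerivAt.comp z (hg z hz).hasFDerivAt).hasFDerivWithinAt)
    (convex_segment x y) (left_mem_segment ℝ x y) (right_mem_segment ℝ x y)
  have hslope : ⟪g y - g x, y - x⟫ = ⟪fderiv ℝ g z (y - x), y - x⟫ := by
    rw [real_inner_comm, inner_sub_right, hmvt, real_inner_comm]
    rfl
  exact hslope ▸ hpos z hz

lemma isOpen_setOf_inner_map_self_pos [ProperSpace E] :
    IsOpen {A : E →L[ℝ] E | ∀ y ≠ 0, 0 < ⟪A y, y⟫} := by
  have hsphere : {A : E →L[ℝ] E | ∀ y ≠ 0, 0 < ⟪A y, y⟫} =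
      {A | ∀ y ∈ Metric.sphere (0 : E) 1, 0 < ⟪A y, y⟫} := by
    ext A
    refine ⟨fun hA y hy => hA y (ne_zero_of_mem_unit_sphere ⟨y, hy⟩), fun hA y hy => ?_⟩
    have hunit := hA (‖y‖⁻¹ • y) (by simp [norm_smul, hy])
    rw [map_smul, real_inner_smul_left, real_inner_smul_right] at hunit
    have hinv : 0 < ‖y‖⁻¹ := inv_pos.2 (norm_pos_iff.2 hy)
    exact pos_of_mul_pos_right (pos_of_mul_pos_right hunit hinv.le) hinv.le
  rw [hsphere, isOpen_iff_eventually]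
  intro A hA
  have hcont : Continuous fun p : (E →L[ℝ] E) × E => ⟪p.1 p.2, p.2⟫ := by fun_prop
  exact (isCompact_sphere _ _).eventually_forall_of_forall_eventually fun y hy =>
    hcont.continuousAt.eventually_const_lt (hA y hy)

lemma norm_le_of_inner_deriv_neg {w w' : ℝ → E} {a b r : ℝ} (hw : ContinuousOn w (Icc a b))
    (hw' : ∀ t ∈ Ico a b, HasDerivWithinAt w (w' t) (Ici t) t) (ha : ‖w a‖ ≤ r)
    (hneg : ∀ t ∈ Ico a b, ‖w t‖ = r → ⟪w t, w' t⟫ < 0) : ∀ t ∈ Icc a b, ‖w t‖ ≤ r := by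
  have hr : 0 ≤ r := (norm_nonneg _).trans ha
  have hsq : ∀ ⦃t⦄, t ∈ Icc a b → ‖w t‖ ^ 2 ≤ r ^ 2 :=
    image_le_of_deriv_right_lt_deriv_boundary (B := fun _ => r ^ 2) (B' := fun _ => 0)
      (hw.norm.pow 2) (fun t ht => (hw' t ht).norm_sq) (pow_le_pow_left₀ (norm_nonneg _) ha 2)
      (fun _ => hasDerivAt_const _ _) fun t ht heq =>
        mul_neg_of_pos_of_neg two_pos (hneg t ht ((sq_eq_sq₀ (norm_nonneg _) hr).1 heq))
  exact fun t ht => (sq_le_sq₀ (norm_nonneg _) hr).1 (hsq ht)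

end InnerProductSpace

/-- The family `v` of curves solves the singularly perturbed equation `ε v̇ = -g(t, v)` on the set
of times `s`, for every parameter `ε > 0`. The derivative is taken within `s`, hence one-sided at
the end points of an interval. -/
def IsSingularlyPerturbedFlow {E : Type*} [NormedAddCommGroup E] [NormedSpace ℝ E]
    (g : ℝ → E → E) (v : ℝ → ℝ → E) (s : Set ℝ) : Prop :=
  ∀ ε > 0, IsIntegralCurveOn (v ε) (fun t x => -(ε⁻¹ • g t x)) s

lemma IsSingularlyPerturbedFlow.mono {E : Type*} [NormedAddCommGroup E] [NormedSpace ℝ E]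
    {g : ℝ → E → E} {v : ℝ → ℝ → E} {s s' : Set ℝ} (hv : IsSingularlyPerturbedFlow g v s)
    (hs : s' ⊆ s) : IsSingularlyPerturbedFlow g v s' :=
  fun ε hε => (hv ε hε).mono hs

section Tracking

variable {E : Type*} [NormedAddCommGroup E] [InnerProductSpace ℝ E] [ProperSpace E]
  {g : ℝ → E → E} {u : ℝ → E} {v : ℝ → ℝ → E} {a b r : ℝ}

lemma exists_forall_inner_pos_of_fderiv_pos
    (hg : ContDiffOn ℝ 1 (Function.uncurry g) (Icc a b ×ˢ univ)) (hu : ContinuousOn u (Icc a b))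
    (hzero : ∀ t ∈ Icc a b, g t (u t) = 0)
    (hpos : ∀ t ∈ Icc a b, ∀ y ≠ 0, 0 < ⟪fderiv ℝ (g t) (u t) y, y⟫) :
    ∃ ρ > 0, ∀ t ∈ Icc a b, ∀ z ≠ 0, ‖z‖ < ρ → 0 < ⟪g t (u t + z), z⟫ := by
  have hfderiv : ContinuousOn (fun p : ℝ × E => fderiv ℝ (g p.1) p.2) (Icc a b ×ˢ univ) :=
    (contDiffOn_fderiv_of_uncurry hg (m := 0) (by norm_num)).continuousOn
  obtain ⟨ρ, hρ, htube⟩ := exists_forall_mem_ball_mem_open isCompact_Icc hfderiv hu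
    isOpen_setOf_inner_map_self_pos hpos
  refine ⟨ρ, hρ, fun t ht z hz hzρ => ?_⟩
  have hsegment : segment ℝ (u t) (u t + z) ⊆ Metric.ball (u t) ρ :=
    (convex_ball _ _).segment_subset (Metric.mem_ball_self hρ) (by simpa using hzρ)
  have hmono := inner_sub_sub_pos_of_fderiv_pos (g := g t) (x := u t) (y := u t + z)
    (fun x _ => (hasFDerivAt_of_differentiableWithinAt_uncurry
      (hg.differentiableOn one_ne_zero (t, x) ⟨ht, mem_univ _⟩) ht).differentiableAt)
    (fun x hx => htube t ht x (hsegment hx) _ (by simpa using hz))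
  simpa only [hzero t ht, sub_zero, add_sub_cancel_left] using hmono

lemma exists_pos_forall_le_inner_of_norm_eq {s : Set ℝ} (hs : IsCompact s)
    (hg : ContinuousOn (Function.uncurry g) (s ×ˢ univ)) (hu : ContinuousOn u s)
    (hpos : ∀ t ∈ s, ∀ z, ‖z‖ = r → 0 < ⟪g t (u t + z), z⟫) :
    ∃ m > 0, ∀ t ∈ s, ∀ z, ‖z‖ = r → m ≤ ⟪g t (u t + z), z⟫ := by
  have hu_fst : ContinuousOn (fun p : ℝ × E => u p.1) (s ×ˢ Metric.sphere 0 r) :=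
    hu.comp continuousOn_fst fun p hp => hp.1
  have hinward : ContinuousOn (fun p : ℝ × E => ⟪g p.1 (u p.1 + p.2), p.2⟫)
      (s ×ˢ Metric.sphere 0 r) :=
    (hg.comp (continuousOn_fst.prodMk (hu_fst.add continuousOn_snd))
      fun p hp => ⟨hp.1, mem_univ _⟩).inner continuousOn_snd
  obtain ⟨m, hm, hm_le⟩ := (hs.prod (isCompact_sphere 0 r)).exists_forall_le' hinward
    fun p hp => hpos p.1 hp.1 p.2 (mem_sphere_zero_iff_norm.1 hp.2)
  exact ⟨m, hm, fun t ht z hz => hm_le (t, z) ⟨ht, mem_sphere_zero_iff_norm.2 hz⟩⟩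

lemma IsSingularlyPerturbedFlow.eventually_norm_sub_le
    (hv : IsSingularlyPerturbedFlow g v (Icc a b)) (hab : a < b)
    (hg : ContinuousOn (Function.uncurry g) (Icc a b ×ˢ univ)) (hu : ContDiffOn ℝ 1 u (Icc a b))
    (hpos : ∀ t ∈ Icc a b, ∀ z, ‖z‖ = r → 0 < ⟪g t (u t + z), z⟫)
    (hinit : ∀ᶠ ε in 𝓝[>] 0, ‖v ε a - u a‖ ≤ r) :
    ∀ᶠ ε in 𝓝[>] 0, ∀ t ∈ Icc a b, ‖v ε t - u t‖ ≤ r := by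
  set u' := derivWithin u (Icc a b)
  obtain ⟨m, hm, hm_le⟩ :=
    exists_pos_forall_le_inner_of_norm_eq isCompact_Icc hg hu.continuousOn hpos
  obtain ⟨M, hM⟩ := isCompact_Icc.exists_bound_of_continuousOn
    (hu.continuousOn_derivWithin (uniqueDiffOn_Icc hab) le_rfl)
  have hlarge : Tendsto (fun ε : ℝ => ε⁻¹ * m) (𝓝[>] 0) atTop :=
    tendsto_inv_nhdsGT_zero.atTop_mul_const hm
  filter_upwards [hlarge.eventually_gt_atTop (r * M), hinit, self_mem_nhdsWithin]
    with ε hε_small hε_init hε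
  have hw : ∀ t ∈ Icc a b, HasDerivWithinAt (fun t => v ε t - u t)
      (-(ε⁻¹ • g t (v ε t)) - u' t) (Icc a b) t := fun t ht =>
    (hv ε hε t ht).sub (hu.differentiableOn one_ne_zero t ht).hasDerivWithinAt
  refine norm_le_of_inner_deriv_neg (fun t ht => (hw t ht).continuousWithinAt)
    (fun t ht => (hw t (Ico_subset_Icc_self ht)).mono_of_mem_nhdsWithin
      (Icc_mem_nhdsGE_of_mem ht)) hε_init fun t ht hnorm => ?_
  have hpull : m ≤ ⟪v ε t - u t, g t (v ε t)⟫ := by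
    simpa only [add_sub_cancel, real_inner_comm] using
      hm_le t (Ico_subset_Icc_self ht) (v ε t - u t) hnorm
  have hdrift : -⟪v ε t - u t, u' t⟫ ≤ r * M := calc
    -⟪v ε t - u t, u' t⟫ ≤ ‖v ε t - u t‖ * ‖u' t‖ :=
      (neg_le_abs _).trans (abs_real_inner_le_norm _ _)
    _ ≤ r * M := by
      rw [hnorm]
      exact mul_le_mul_of_nonneg_left (hM t (Ico_subset_Icc_self ht)) (hnorm ▸ norm_nonneg _)
  calc ⟪v ε t - u t, -(ε⁻¹ • g t (v ε t)) - u' t⟫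
      = -⟪v ε t - u t, u' t⟫ - ε⁻¹ * ⟪v ε t - u t, g t (v ε t)⟫ := by
        rw [inner_sub_right, inner_neg_right, real_inner_smul_right]
        ring
    _ ≤ r * M - ε⁻¹ * m := sub_le_sub hdrift (mul_le_mul_of_nonneg_left hpull (inv_pos.2 hε).le)
    _ < 0 := sub_neg.2 hε_small

lemma IsSingularlyPerturbedFlow.tendstoUniformlyOn
    (hv : IsSingularlyPerturbedFlow g v (Icc a b)) (hab : a < b)
    (hg : ContDiffOn ℝ 1 (Function.uncurry g) (Icc a b ×ˢ univ)) (hu : ContDiffOn ℝ 1 u (Icc a b))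
    (hzero : ∀ t ∈ Icc a b, g t (u t) = 0)
    (hpos : ∀ t ∈ Icc a b, ∀ y ≠ 0, 0 < ⟪fderiv ℝ (g t) (u t) y, y⟫)
    (hinit : Tendsto (fun ε => v ε a) (𝓝[>] 0) (𝓝 (u a))) :
    TendstoUniformlyOn v u (𝓝[>] 0) (Icc a b) := by
  obtain ⟨ρ, hρ, hinward⟩ := exists_forall_inner_pos_of_fderiv_pos hg hu.continuousOn hzero hpos
  refine Metric.tendstoUniformlyOn_iff.2 fun η hη => ?_
  obtain ⟨r, hr, hr_lt⟩ := exists_between (lt_min hρ hη)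
  have hinit_r : ∀ᶠ ε in 𝓝[>] 0, ‖v ε a - u a‖ ≤ r := by
    simpa only [dist_eq_norm] using hinit.eventually (Metric.closedBall_mem_nhds _ hr)
  filter_upwards [hv.eventually_norm_sub_le hab hg.continuousOn hu
    (fun t ht z hz => hinward t ht z (norm_pos_iff.1 (hz ▸ hr))
      (hz ▸ hr_lt.trans_le (min_le_left _ _))) hinit_r] with ε hε t ht
  rw [dist_comm, dist_eq_norm]
  exact (hε t ht).trans_lt (hr_lt.trans_le (min_le_right _ _))

end Tracking

section Escape

variable {E : Type*} [NormedAddCommGroup E] [InnerProductSpace ℝ E] [CompleteSpace E]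
  {f : ℝ → E → ℝ}

lemma hasDerivWithinAt_along_gradient_curve {s : Set ℝ} {w : ℝ → E} {c t : ℝ}
    (hf : DifferentiableOn ℝ (Function.uncurry f) (s ×ˢ univ))
    (hw : IsIntegralCurveOn w (fun t x => -(c • gradient (f t) x)) s) (ht : t ∈ s) :
    HasDerivWithinAt (fun t => f t (w t))
      (fderivWithin ℝ (Function.uncurry f) (s ×ˢ univ) (t, w t) (1, 0) -
        c * ‖gradient (f t) (w t)‖ ^ 2) s t := by
  set L := fderivWithin ℝ (Function.uncurry f) (s ×ˢ univ) (t, w t)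
  have hf_t := hf (t, w t) ⟨ht, mem_univ _⟩
  have hspace (y : E) : L (0, y) = ⟪gradient (f t) (w t), y⟫ := by
    rw [← InnerProductSpace.toDual_apply_apply, toDual_gradient,
      (hasFDerivAt_of_differentiableWithinAt_uncurry hf_t ht).fderiv]
    rfl
  have hmaps : MapsTo (fun t => (t, w t)) s (s ×ˢ univ) := fun r hr => ⟨hr, mem_univ _⟩
  have hchain : HasDerivWithinAt (fun t => f t (w t)) (L (1, -(c • gradient (f t) (w t)))) s t :=
    HasFDerivWithinAt.comp_hasDerivWithinAt (l := Function.uncurry f) t hf_t.hasFDerivWithinAt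
      ((hasDerivWithinAt_id t s).prodMk (hw t ht)) hmaps
  refine hchain.congr_deriv ?_
  calc L (1, -(c • gradient (f t) (w t)))
      = L (1, 0) + L (0, -(c • gradient (f t) (w t))) := by
        rw [← map_add, Prod.mk_add_mk, add_zero, zero_add]
    _ = L (1, 0) - c * ‖gradient (f t) (w t)‖ ^ 2 := by
        rw [hspace, inner_neg_right, real_inner_smul_right, real_inner_self_eq_norm_sq,
          sub_eq_add_neg]

lemma sub_le_along_gradient_curve {w : ℝ → E} {a b c m D : ℝ} (hab : a ≤ b) (hc : 0 ≤ c)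
    (hf : DifferentiableOn ℝ (Function.uncurry f) (Icc a b ×ˢ univ))
    (hw : IsIntegralCurveOn w (fun t x => -(c • gradient (f t) x)) (Icc a b))
    (hD : ∀ t ∈ Icc a b,
      fderivWithin ℝ (Function.uncurry f) (Icc a b ×ˢ univ) (t, w t) (1, 0) ≤ D)
    (hm : ∀ t ∈ Icc a b, m ≤ ‖gradient (f t) (w t)‖ ^ 2) :
    f b (w b) - f a (w a) ≤ (D - c * m) * (b - a) := by
  have hderiv := fun t (ht : t ∈ Icc a b) => hasDerivWithinAt_along_gradient_curve hf hw ht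
  have hderivAt := fun t (ht : t ∈ interior (Icc a b)) =>
    (hderiv t (interior_subset ht)).hasDerivAt (mem_interior_iff_mem_nhds.1 ht)
  refine (convex_Icc a b).image_sub_le_mul_sub_of_deriv_le
    (fun t ht => (hderiv t ht).continuousWithinAt)
    (fun t ht => (hderivAt t ht).differentiableAt.differentiableWithinAt) (fun t ht => ?_)
    a (left_mem_Icc.2 hab) b (right_mem_Icc.2 hab) hab
  rw [(hderivAt t ht).deriv]
  exact sub_le_sub (hD t (interior_subset ht))
    (mul_le_mul_of_nonneg_left (hm t (interior_subset ht)) hc)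

lemma IsSingularlyPerturbedFlow.eventually_exists_notMem {v : ℝ → ℝ → E} {a b : ℝ} {K : Set E}
    (hv : IsSingularlyPerturbedFlow (fun t => gradient (f t)) v (Icc a b)) (hab : a < b)
    (hf : ContDiffOn ℝ 1 (Function.uncurry f) (Icc a b ×ˢ univ)) (hK : IsCompact K)
    (hne : ∀ t ∈ Icc a b, ∀ x ∈ K, gradient (f t) x ≠ 0) :
    ∀ᶠ ε in 𝓝[>] 0, ∃ t ∈ Icc a b, v ε t ∉ K := by
  have hsub : Icc a b ×ˢ K ⊆ Icc a b ×ˢ univ := prod_mono_right (subset_univ K)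
  have hcompact : IsCompact (Icc a b ×ˢ K) := isCompact_Icc.prod hK
  have hgrad : ContinuousOn (fun p : ℝ × E => ‖gradient (f p.1) p.2‖ ^ 2) (Icc a b ×ˢ K) :=
    ((contDiffOn_gradient_of_uncurry hf (m := 0) (by norm_num)).continuousOn.mono hsub).norm.pow 2
  have htime : ContinuousOn
      (fun p => fderivWithin ℝ (Function.uncurry f) (Icc a b ×ˢ univ) p (1, 0)) (Icc a b ×ˢ K) :=
    ((hf.continuousOn_fderivWithin ((uniqueDiffOn_Icc hab).prod uniqueDiffOn_univ)
      le_rfl).clm_apply continuousOn_const).mono hsub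
  obtain ⟨C, hC⟩ := hcompact.exists_bound_of_continuousOn (hf.continuousOn.mono hsub)
  obtain ⟨D, hD⟩ := hcompact.exists_bound_of_continuousOn htime
  obtain ⟨m, hm, hm_le⟩ := hcompact.exists_forall_le' hgrad fun p hp =>
    pow_pos (norm_pos_iff.2 (hne p.1 hp.1 p.2 hp.2)) 2
  have hdrop : Tendsto (fun ε : ℝ => (D - ε⁻¹ * m) * (b - a)) (𝓝[>] 0) atBot :=
    (tendsto_atBot_add_const_left _ D (tendsto_neg_atTop_atBot.comp
      (tendsto_inv_nhdsGT_zero.atTop_mul_const hm))).atBot_mul_const (sub_pos.2 hab)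
  filter_upwards [hdrop.eventually_lt_atBot (-(2 * C)), self_mem_nhdsWithin] with ε hε_small hε
  by_contra! hstay
  have hmem : ∀ t ∈ Icc a b, (t, v ε t) ∈ Icc a b ×ˢ K := fun t ht => ⟨ht, hstay t ht⟩
  have hle := sub_le_along_gradient_curve hab.le (inv_pos.2 hε).le
    (hf.differentiableOn one_ne_zero) (hv ε hε)
    (fun t ht => (le_abs_self _).trans (hD _ (hmem t ht))) (fun t ht => hm_le _ (hmem t ht))
  have hCa : f a (v ε a) ≤ C := (abs_le.1 (hC _ (hmem a (left_mem_Icc.2 hab.le)))).2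
  have hCb : -C ≤ f b (v ε b) := (abs_le.1 (hC _ (hmem b (right_mem_Icc.2 hab.le)))).1
  linarith

end Escape

section ExitTime

variable {E : Type*} [NormedAddCommGroup E] [InnerProductSpace ℝ E] [ProperSpace E]
  {f : ℝ → E → ℝ} {T t₁ δ₁ τ₁ : ℝ} {x₁ : E} {u : ℝ → E} {uε : ℝ → ℝ → E}

lemma eventually_mem_lowerBounds_exit_times
    (hf : ContDiffOn ℝ 2 (Function.uncurry f) (Icc 0 T ×ˢ univ)) (ht₁T : t₁ ≤ T)
    (hu : ContDiffOn ℝ 1 u (Ico 0 t₁)) (hcrit : ∀ t ∈ Ico 0 t₁, gradient (f t) (u t) = 0)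
    (hpd : ∀ t ∈ Ico 0 t₁, ∀ y ≠ 0, 0 < ⟪fderiv ℝ (gradient (f t)) (u t) y, y⟫)
    (hτ₁ : τ₁ ∈ Ico 0 t₁) (hτ₁u : ∀ t ∈ Ico τ₁ t₁, ‖u t - x₁‖ < δ₁)
    (hode : IsSingularlyPerturbedFlow (fun t => gradient (f t)) uε (Icc 0 T))
    (hinit : Tendsto (fun ε => uε ε 0) (𝓝[>] 0) (𝓝 (u 0))) {a : ℝ} (ha : a < t₁) :
    ∀ᶠ ε in 𝓝[>] 0, a ∈ lowerBounds {t | t ∈ Icc τ₁ T ∧ δ₁ ≤ ‖uε ε t - x₁‖} := by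
  obtain ⟨b, hb, hbt₁⟩ := exists_between (max_lt ha hτ₁.2)
  obtain ⟨hab, hτb⟩ := max_lt_iff.1 hb
  have hsub : Icc 0 b ⊆ Ico 0 t₁ := Icc_subset_Ico_right hbt₁
  have hsubT : Icc 0 b ⊆ Icc 0 T := Icc_subset_Icc_right (hbt₁.le.trans ht₁T)
  have htrack : TendstoUniformlyOn uε u (𝓝[>] 0) (Icc 0 b) :=
    (hode.mono hsubT).tendstoUniformlyOn (hτ₁.1.trans_lt hτb)
      ((contDiffOn_gradient_of_uncurry hf le_rfl).mono (prod_mono_left hsubT)) (hu.mono hsub)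
      (fun t ht => hcrit t (hsub ht)) (fun t ht => hpd t (hsub ht)) hinit
  obtain ⟨η, hη, hgap⟩ := isCompact_Icc.exists_forall_le' (s := Icc τ₁ b)
    (f := fun t => δ₁ - ‖u t - x₁‖) (a := 0)
    (continuousOn_const.sub ((hu.continuousOn.mono
      ((Icc_subset_Icc_left hτ₁.1).trans hsub)).sub continuousOn_const).norm)
    (fun t ht => sub_pos.2 (hτ₁u t ⟨ht.1, ht.2.trans_lt hbt₁⟩))
  filter_upwards [Metric.tendstoUniformlyOn_iff.1 htrack η hη] with ε hε t ⟨ht, hexit⟩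
  by_contra! hta
  have hdist := hε t ⟨hτ₁.1.trans ht.1, (hta.trans hab).le⟩
  rw [dist_comm, dist_eq_norm] at hdist
  linarith [hgap t ⟨ht.1, (hta.trans hab).le⟩,
    norm_sub_le_norm_sub_add_norm_sub (uε ε t) (u t) x₁]

lemma eventually_exists_exit_time_lt
    (hf : ContDiffOn ℝ 1 (Function.uncurry f) (Icc 0 T ×ˢ univ)) (ht₁ : 0 ≤ t₁) (ht₁T : t₁ < T)
    (hnz : ∀ᶠ t in 𝓝[>] t₁, ∀ x, ‖x - x₁‖ ≤ δ₁ → gradient (f t) x ≠ 0) (hτ₁ : τ₁ ≤ t₁)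
    (hode : IsSingularlyPerturbedFlow (fun t => gradient (f t)) uε (Icc 0 T)) {b : ℝ}
    (hb : t₁ < b) :
    ∀ᶠ ε in 𝓝[>] 0, ∃ t ∈ {t | t ∈ Icc τ₁ T ∧ δ₁ ≤ ‖uε ε t - x₁‖}, t < b := by
  obtain ⟨c, hc, hnz_c⟩ := mem_nhdsGT_iff_exists_Ioo_subset.1 hnz
  obtain ⟨q, hq, hq_lt⟩ := exists_between (lt_min (lt_min hb ht₁T) hc)
  obtain ⟨p, hp, hpq⟩ := exists_between hq
  simp only [lt_min_iff] at hq_lt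
  obtain ⟨⟨hqb, hqT⟩, hqc⟩ := hq_lt
  have hsub : Icc p q ⊆ Icc 0 T := Icc_subset_Icc (ht₁.trans hp.le) hqT.le
  have hne : ∀ t ∈ Icc p q, ∀ x ∈ Metric.closedBall x₁ δ₁, gradient (f t) x ≠ 0 :=
    fun t ht x hx => hnz_c ⟨hp.trans_le ht.1, ht.2.trans_lt hqc⟩ x (mem_closedBall_iff_norm.1 hx)
  filter_upwards [(hode.mono hsub).eventually_exists_notMem hpq (hf.mono (prod_mono_left hsub))
    (isCompact_closedBall x₁ δ₁) hne] with ε ⟨t, ht, hexit⟩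
  rw [mem_closedBall_iff_norm, not_le] at hexit
  exact ⟨t, ⟨⟨hτ₁.trans (hp.le.trans ht.1), (hsub ht).2⟩, hexit.le⟩, ht.2.trans_lt hqb⟩

theorem exit_times_tendsto_critical_time_general
    (hf : ContDiffOn ℝ 2 (Function.uncurry f) (Icc 0 T ×ˢ univ)) (ht₁T : t₁ < T)
    (hu : ContDiffOn ℝ 1 u (Ico 0 t₁)) (hcrit : ∀ t ∈ Ico 0 t₁, gradient (f t) (u t) = 0)
    (hpd : ∀ t ∈ Ico 0 t₁, ∀ y ≠ 0, 0 < ⟪fderiv ℝ (gradient (f t)) (u t) y, y⟫)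
    (hnz : ∀ᶠ t in 𝓝[>] t₁, ∀ x, ‖x - x₁‖ ≤ δ₁ → gradient (f t) x ≠ 0)
    (hτ₁ : τ₁ ∈ Ico 0 t₁) (hτ₁u : ∀ t ∈ Ico τ₁ t₁, ‖u t - x₁‖ < δ₁)
    (hode : IsSingularlyPerturbedFlow (fun t => gradient (f t)) uε (Icc 0 T))
    (hinit : Tendsto (fun ε => uε ε 0) (𝓝[>] 0) (𝓝 (u 0))) :
    (∀ᶠ ε in 𝓝[>] 0, {t | t ∈ Icc τ₁ T ∧ δ₁ ≤ ‖uε ε t - x₁‖}.Nonempty) ∧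
    Tendsto (fun ε => sInf {t | t ∈ Icc τ₁ T ∧ δ₁ ≤ ‖uε ε t - x₁‖}) (𝓝[>] 0) (𝓝 t₁) := by
  have hupper := fun b (hb : t₁ < b) => eventually_exists_exit_time_lt (hf.of_le one_le_two)
    (hτ₁.1.trans hτ₁.2.le) ht₁T hnz hτ₁.2.le hode hb
  refine ⟨(hupper T ht₁T).mono fun ε ⟨t, ht, _⟩ => ⟨t, ht⟩,
    tendsto_sInf_of_eventually_bounds (fun a ha => ?_) hupper⟩
  exact eventually_mem_lowerBounds_exit_times hf ht₁T.le hu hcrit hpd hτ₁ hτ₁u hode hinit ha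

end ExitTime

/-- for `ε` small the solution `u_ε` eventually leaves the ball
`B(x₁,δ₁)` after time `τ₁`, and the exit times
`t_ε^{δ₁} = inf {t ∈ [τ₁,T] : ‖u_ε(t) − x₁‖ ≥ δ₁}` converge to `t₁` as `ε → 0`. -/
theorem exit_times_tendsto_critical_time
    {n : ℕ} (hn : 1 ≤ n) {T : ℝ} (hT : 0 < T)
    (f : ℝ → EuclideanSpace ℝ (Fin n) → ℝ)
    (hf : ContDiffOn ℝ 3 (Function.uncurry f)
      (Set.Icc 0 T ×ˢ (Set.univ : Set (EuclideanSpace ℝ (Fin n)))))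
    {a₀ c₀ : ℝ} (ha₀ : 0 ≤ a₀) (hc₀ : 0 < c₀)
    (hA1 : ∀ t ∈ Set.Icc (0:ℝ) T, ∀ x : EuclideanSpace ℝ (Fin n),
      ⟪gradient (f t) x, x⟫ ≥ c₀ * ‖x‖ ^ 2 - a₀)
    (t₁ : ℝ) (ht₁ : 0 < t₁) (ht₁T : t₁ < T)
    (u : ℝ → EuclideanSpace ℝ (Fin n))
    (hu : ContDiffOn ℝ 1 u (Set.Ico 0 t₁))
    (hcrit : ∀ t ∈ Set.Ico (0:ℝ) t₁, gradient (f t) (u t) = 0)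
    (hpd : ∀ t ∈ Set.Ico (0:ℝ) t₁, ∀ y : EuclideanSpace ℝ (Fin n), y ≠ 0 →
      0 < ⟪(fderiv ℝ (gradient (f t)) (u t)) y, y⟫)
    (x₁ : EuclideanSpace ℝ (Fin n))
    (hx₁ : Tendsto u (nhdsWithin t₁ (Set.Iio t₁)) (nhds x₁))
    (r₁ R₁ : ℝ) (hr₁ : 0 < r₁) (hR₁ : 0 < R₁) (hr₁T : t₁ + r₁ ≤ T)
    (hnz : ∀ t ∈ Set.Ioc t₁ (t₁ + r₁), ∀ x : EuclideanSpace ℝ (Fin n),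
      ‖x - x₁‖ ≤ R₁ → gradient (f t) x ≠ 0)
    (δ₁ : ℝ) (hδ₁ : 0 < δ₁) (hδ₁R₁ : δ₁ < R₁)
    (τ₁ : ℝ) (hτ₁ : τ₁ ∈ Set.Ioo 0 t₁)
    (hτ₁u : ∀ t ∈ Set.Ico τ₁ t₁, ‖u t - x₁‖ < δ₁ / 4)
    (uε : ℝ → ℝ → EuclideanSpace ℝ (Fin n))
    (hode : ∀ ε : ℝ, 0 < ε → ∀ t ∈ Set.Icc (0:ℝ) T,
      HasDerivWithinAt (uε ε) (-(ε⁻¹ • gradient (f t) (uε ε t))) (Set.Icc 0 T) t)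
    (hinit : Tendsto (fun ε : ℝ => uε ε 0) (nhdsWithin 0 (Set.Ioi 0)) (nhds (u 0))) :
    (∀ᶠ ε : ℝ in nhdsWithin 0 (Set.Ioi 0),
      {t : ℝ | t ∈ Set.Icc τ₁ T ∧ δ₁ ≤ ‖uε ε t - x₁‖}.Nonempty) ∧
    Tendsto (fun ε : ℝ => sInf {t : ℝ | t ∈ Set.Icc τ₁ T ∧ δ₁ ≤ ‖uε ε t - x₁‖})
      (nhdsWithin 0 (Set.Ioi 0)) (nhds t₁) :=
  exit_times_tendsto_critical_time_general (hf.of_le (by norm_num)) ht₁T hu hcrit hpd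
    (by filter_upwards [Ioc_mem_nhdsGT (lt_add_of_pos_right t₁ hr₁)] with t ht x hx
          using hnz t ht x (hx.trans hδ₁R₁.le))
    (Ioo_subset_Ico_self hτ₁) (fun t ht => (hτ₁u t ht).trans (by linarith)) hode hinit
end

section
/- Let g : ℝⁿ → ℝ be of class C² satisfying ∇g(x)·x ≥ c₀|x|² − a₀ for all x ∈ ℝⁿ (with a₀ ≥ 0, c₀ > 0), and assume that g has only finitely many critical points. Let w : ℝ → ℝⁿ be a solution of ẇ(s) = −∇g(w(s)), let x₁ be a critical point of g, and suppose there exists a sequence s_k → +∞ such that w(−s_k) → x₁ as k → ∞. Then lim_{s→−∞} w(s) = x₁. -/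
/-!
Let `w` descend along the gradient of `g`, with `x₁` as a cluster point at `-∞`. The energy `g ∘ w`
is antitone, so clustering at `x₁` forces it to converge to `g x₁` at `-∞`. On a small annulus
around the isolated critical point `x₁` the gradient has norm at least some `μ > 0`. Since the
energy decreases at rate `‖∇g(w)‖²`, hence at least `μ` times the speed `‖∇g(w)‖` there, every
outward crossing of the annulus costs at least `μ` times its width in energy. This is impossible
sufficiently early, so a curve that returns to the inner ball at arbitrarily early times never
leaves the outer ball near `-∞`.
-/

open Set Filter Topology
open scoped RealInnerProductSpace

section Crossing

variable {α β : Type*} [ConditionallyCompleteLinearOrder α] [DenselyOrdered α]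
  [TopologicalSpace α] [OrderTopology α]
  [LinearOrder β] [TopologicalSpace β] [OrderClosedTopology β]
  {φ : α → β} {s t : α} {r R : β}

lemma exists_first_mem_Icc_eq (hst : s ≤ t) (hφ : ContinuousOn φ (Icc s t))
    (hR : R ∈ Icc (φ s) (φ t)) :
    ∃ b ∈ Icc s t, φ b = R ∧ ∀ u ∈ Icc s b, φ u ≤ R := by
  have hcompact : IsCompact (Icc s t ∩ φ ⁻¹' {R}) :=
    isCompact_Icc.of_isClosed_subset
      (hφ.preimage_isClosed_of_isClosed isClosed_Icc isClosed_singleton) inter_subset_left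
  obtain ⟨b, ⟨hb, hbR⟩, hleast⟩ :=
    hcompact.exists_isLeast (intermediate_value_Icc hst hφ hR)
  refine ⟨b, hb, hbR, fun u hu ↦ le_of_not_gt fun hRu ↦ ?_⟩
  obtain ⟨c, hc, hcR⟩ := intermediate_value_Icc hu.1
    (hφ.mono (Icc_subset_Icc_right (hu.2.trans hb.2))) ⟨hR.1, hRu.le⟩
  have hbc : b ≤ c := hleast ⟨⟨hc.1, hc.2.trans (hu.2.trans hb.2)⟩, hcR⟩
  have hub : u = b := le_antisymm hu.2 (hbc.trans hc.2)
  exact hRu.ne' (hub ▸ hbR)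

lemma exists_last_mem_Icc_eq (hst : s ≤ t) (hφ : ContinuousOn φ (Icc s t))
    (hr : r ∈ Icc (φ s) (φ t)) :
    ∃ a ∈ Icc s t, φ a = r ∧ ∀ u ∈ Icc a t, r ≤ φ u := by
  obtain ⟨a, ha, har, hle⟩ := exists_first_mem_Icc_eq (α := αᵒᵈ) (β := βᵒᵈ)
    (φ := OrderDual.toDual ∘ φ ∘ OrderDual.ofDual) (s := OrderDual.toDual t)
    (t := OrderDual.toDual s) (R := OrderDual.toDual r) hst (by rwa [Icc_toDual]) hr.symm
  exact ⟨a, ha.symm, har, fun u hu ↦ hle u hu.symm⟩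

lemma exists_Icc_subset_mapsTo_Icc (hst : s ≤ t) (hφ : ContinuousOn φ (Icc s t))
    (hs : φ s ≤ r) (hrR : r ≤ R) (ht : R ≤ φ t) :
    ∃ a b, a ≤ b ∧ Icc a b ⊆ Icc s t ∧ φ a = r ∧ φ b = R ∧ MapsTo φ (Icc a b) (Icc r R) := by
  obtain ⟨b, hb, hbR, hle⟩ := exists_first_mem_Icc_eq hst hφ ⟨hs.trans hrR, ht⟩
  obtain ⟨a, ha, har, hge⟩ := exists_last_mem_Icc_eq hb.1
    (hφ.mono (Icc_subset_Icc_right hb.2)) ⟨hs, hrR.trans hbR.ge⟩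
  exact ⟨a, b, ha.2, Icc_subset_Icc ha.1 hb.2, har, hbR,
    fun u hu ↦ ⟨hge u hu, hle u ⟨ha.1.trans hu.1, hu.2⟩⟩⟩

end Crossing

lemma tendsto_atBot_of_antitoneOn_of_mapClusterPt {α β : Type*} [Preorder α]
    [LinearOrder β] [TopologicalSpace β] [OrderTopology β] {f : α → β} {T : α} {y : β}
    (hf : AntitoneOn f (Iic T)) (hy : MapClusterPt y atBot f) : Tendsto f atBot (𝓝 y) := by
  refine tendsto_order.2 ⟨fun l hl ↦ ?_, fun l hl ↦ ?_⟩
  · obtain ⟨s, hls, hsT⟩ :=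
      ((hy.frequently (eventually_gt_nhds hl)).and_eventually (eventually_le_atBot T)).exists
    filter_upwards [eventually_le_atBot s] with t hts
    exact hls.trans_le (hf (hts.trans hsT) hsT hts)
  · filter_upwards [eventually_le_atBot T] with t htT
    obtain ⟨s, hsl, hst⟩ :=
      ((hy.frequently (eventually_lt_nhds hl)).and_eventually (eventually_le_atBot t)).exists
    exact (hf (hst.trans htT) htT hst).trans_lt hsl

lemma exists_annulus_forall_le_norm {X F : Type*} [PseudoMetricSpace X] [ProperSpace X]
    [NormedAddCommGroup F] {f : X → F} {x₀ : X} {ε : ℝ} (hf : Continuous f)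
    (hx₀ : ∀ᶠ x in 𝓝[≠] x₀, f x ≠ 0) (hε : 0 < ε) :
    ∃ r R μ : ℝ, 0 < r ∧ r < R ∧ R ≤ ε ∧ 0 < μ ∧ ∀ x, dist x x₀ ∈ Icc r R → μ ≤ ‖f x‖ := by
  obtain ⟨δ, hδ, hball⟩ := Metric.nhds_basis_closedBall.mem_iff.1
    (eventually_nhdsWithin_iff.1 hx₀)
  have hR : 0 < min ε δ := lt_min hε hδ
  have hcompact : IsCompact {x | dist x x₀ ∈ Icc (min ε δ / 2) (min ε δ)} :=
    (isCompact_closedBall x₀ (min ε δ)).of_isClosed_subset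
      (isClosed_Icc.preimage (by fun_prop)) fun x hx ↦ hx.2
  obtain ⟨μ, hμ, hle⟩ := hcompact.exists_forall_le' hf.norm.continuousOn fun x hx ↦
    norm_pos_iff.2 <| hball (hx.2.trans (min_le_right _ _)) <| by
      rintro rfl
      exact ((half_pos hR).trans_le hx.1).ne' (dist_self _)
  exact ⟨_, _, μ, half_pos hR, half_lt_self hR, min_le_left _ _, hμ, hle⟩

lemma continuous_gradient_of_contDiff {𝕜 F : Type*} [RCLike 𝕜] [NormedAddCommGroup F]
    [InnerProductSpace 𝕜 F] [CompleteSpace F] {f : F → 𝕜} (hf : ContDiff 𝕜 1 f) :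
    Continuous (gradient f) :=
  (InnerProductSpace.toDual 𝕜 F).symm.continuous.comp (hf.continuous_fderiv one_ne_zero)

section GradientDescent

variable {E : Type*} [NormedAddCommGroup E] [InnerProductSpace ℝ E] [CompleteSpace E]
  {g : E → ℝ} {w : ℝ → E} {D : Set ℝ}

/-- `w` is a gradient-descent curve of `g` on the time set `D`, i.e. a solution of `ẇ = -∇g(w)`
there. Derivatives are taken within `D`, so at an endpoint of an interval they are one-sided. -/
def IsGradientDescentOn (g : E → ℝ) (w : ℝ → E) (D : Set ℝ) : Prop :=
  IsIntegralCurveOn w (fun _ x ↦ -gradient g x) D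

namespace IsGradientDescentOn

lemma mono {D' : Set ℝ} (hw : IsGradientDescentOn g w D) (hD : D' ⊆ D) :
    IsGradientDescentOn g w D' :=
  IsIntegralCurveOn.mono hw hD

lemma continuousOn (hw : IsGradientDescentOn g w D) : ContinuousOn w D :=
  IsIntegralCurveOn.continuousOn hw

lemma hasDerivWithinAt_comp (hw : IsGradientDescentOn g w D) (hg : Differentiable ℝ g) {t : ℝ}
    (ht : t ∈ D) : HasDerivWithinAt (g ∘ w) (-‖gradient g (w t)‖ ^ 2) D t := by
  have hchain := (hg (w t)).hasGradientAt.hasFDerivAt.comp_hasDerivWithinAt t (hw t ht)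
  rwa [InnerProductSpace.toDual_apply_apply, inner_neg_right, real_inner_self_eq_norm_sq]
    at hchain

lemma antitoneOn_comp (hw : IsGradientDescentOn g w D) (hg : Differentiable ℝ g)
    (hD : Convex ℝ D) : AntitoneOn (g ∘ w) D :=
  antitoneOn_of_hasDerivWithinAt_nonpos hD (hg.continuous.comp_continuousOn hw.continuousOn)
    (fun _ ht ↦ (hw.hasDerivWithinAt_comp hg (interior_subset ht)).mono interior_subset)
    fun _ _ ↦ neg_nonpos.2 (sq_nonneg _)

lemma mul_norm_sub_le {a b μ : ℝ} (hw : IsGradientDescentOn g w (Icc a b))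
    (hg : Differentiable ℝ g) (hab : a ≤ b) (hμ : 0 ≤ μ)
    (hgrad : ∀ t ∈ Icc a b, μ ≤ ‖gradient g (w t)‖) :
    μ * ‖w b - w a‖ ≤ g (w a) - g (w b) := by
  have hfence : ‖μ • (w b - w a)‖ ≤ g (w a) - g (w b) := by
    refine image_norm_le_of_norm_deriv_right_le_deriv_boundary'
      (f := fun t ↦ μ • (w t - w a)) (f' := fun t ↦ μ • -gradient g (w t))
      (B := fun t ↦ g (w a) - g (w t)) (B' := fun t ↦ ‖gradient g (w t)‖ ^ 2)
      ((hw.continuousOn.sub continuousOn_const).const_smul μ) (fun t ht ↦ ?_) (by simp)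
      (continuousOn_const.sub (hg.continuous.comp_continuousOn hw.continuousOn))
      (fun t ht ↦ ?_) (fun t ht ↦ ?_) ⟨hab, le_rfl⟩
    · exact (((hw t (Ico_subset_Icc_self ht)).sub_const _).const_smul μ).mono_of_mem_nhdsWithin
        (Icc_mem_nhdsGE_of_mem ht)
    · simpa using ((hw.hasDerivWithinAt_comp hg (Ico_subset_Icc_self ht)).const_sub
        (g (w a))).mono_of_mem_nhdsWithin (Icc_mem_nhdsGE_of_mem ht)
    · rw [norm_smul, norm_neg, Real.norm_of_nonneg hμ, sq]
      exact mul_le_mul_of_nonneg_right (hgrad t (Ico_subset_Icc_self ht)) (norm_nonneg _)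
  rwa [norm_smul, Real.norm_of_nonneg hμ] at hfence

lemma mul_sub_le_of_crosses_annulus {s t r R μ : ℝ} {x₀ : E}
    (hw : IsGradientDescentOn g w (Icc s t)) (hg : Differentiable ℝ g) (hst : s ≤ t)
    (hμ : 0 ≤ μ) (hgrad : ∀ x, dist x x₀ ∈ Icc r R → μ ≤ ‖gradient g x‖) (hrR : r ≤ R)
    (hs : dist (w s) x₀ ≤ r) (ht : R ≤ dist (w t) x₀) :
    μ * (R - r) ≤ g (w s) - g (w t) := by
  have hdist : ContinuousOn (fun u ↦ dist (w u) x₀) (Icc s t) :=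
    continuous_dist.comp_continuousOn (hw.continuousOn.prodMk continuousOn_const)
  obtain ⟨a, b, hab, hsub, ha, hb, hmaps⟩ :=
    exists_Icc_subset_mapsTo_Icc hst hdist hs hrR ht
  have hamem : a ∈ Icc s t := hsub ⟨le_rfl, hab⟩
  have hbmem : b ∈ Icc s t := hsub ⟨hab, le_rfl⟩
  have henergy := hw.antitoneOn_comp hg (convex_Icc s t)
  calc μ * (R - r) = μ * (dist (w b) x₀ - dist (w a) x₀) := by rw [ha, hb]
    _ ≤ μ * ‖w b - w a‖ := by
      rw [← dist_eq_norm]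
      gcongr
      linarith [dist_triangle (w b) (w a) x₀]
    _ ≤ g (w a) - g (w b) :=
      (hw.mono hsub).mul_norm_sub_le hg hab hμ fun u hu ↦ hgrad _ (hmaps hu)
    _ ≤ g (w s) - g (w t) :=
      sub_le_sub (henergy ⟨le_rfl, hst⟩ hamem hamem.1) (henergy hbmem ⟨hst, le_rfl⟩ hbmem.2)

end IsGradientDescentOn

end GradientDescent

theorem alpha_limit_is_critical_point_general {E : Type*} [NormedAddCommGroup E]
    [InnerProductSpace ℝ E] [FiniteDimensional ℝ E] {g : E → ℝ} {w : ℝ → E} {T : ℝ} {x₁ : E}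
    (hg : ContDiff ℝ 1 g) (hw : IsGradientDescentOn g w (Iic T))
    (hisol : ∀ᶠ x in 𝓝[≠] x₁, gradient g x ≠ 0) (hx₁ : MapClusterPt x₁ atBot w) :
    Tendsto w atBot (𝓝 x₁) := by
  have hgd : Differentiable ℝ g := hg.differentiable one_ne_zero
  have hanti : AntitoneOn (g ∘ w) (Iic T) := hw.antitoneOn_comp hgd (convex_Iic T)
  have henergy : Tendsto (g ∘ w) atBot (𝓝 (g x₁)) :=
    tendsto_atBot_of_antitoneOn_of_mapClusterPt hanti
      (hx₁.continuousAt_comp hgd.continuous.continuousAt)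
  have hle : ∀ t ≤ T, g (w t) ≤ g x₁ := fun t ht ↦ ge_of_tendsto henergy <| by
    filter_upwards [eventually_le_atBot t] with s hst using hanti (hst.trans ht) ht hst
  refine Metric.tendsto_nhds.2 fun ε hε ↦ ?_
  obtain ⟨r, R, μ, hr, hrR, hRε, hμ, hgrad⟩ :=
    exists_annulus_forall_le_norm (continuous_gradient_of_contDiff hg) hisol hε
  have hgap : g x₁ - μ * (R - r) < g x₁ := sub_lt_self _ (mul_pos hμ (sub_pos.2 hrR))
  filter_upwards [eventually_le_atBot T, henergy.eventually_const_lt hgap] with t htT hgt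
  by_contra! hεt
  obtain ⟨s, hsr, hst⟩ := ((hx₁.frequently (Metric.ball_mem_nhds x₁ hr)).and_eventually
    (eventually_le_atBot t)).exists
  have hcost : μ * (R - r) ≤ g (w s) - g (w t) :=
    (hw.mono fun u hu ↦ hu.2.trans htT).mul_sub_le_of_crosses_annulus hgd hst hμ.le hgrad hrR.le
      (Metric.mem_ball.1 hsr).le (hRε.trans hεt)
  rw [Function.comp_apply] at hgt
  linarith [hle s (hst.trans htT)]

/-- for a coercive `C²` function `g` with finitely many critical points,
if a solution `w` of `ẇ = −∇g(w)` has a subsequence `w(−s_k) → x₁` with `s_k → +∞`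
and `x₁` a critical point, then `w(s) → x₁` as `s → −∞`. -/
theorem alpha_limit_is_critical_point
    {n : ℕ} (hn : 1 ≤ n)
    (g : EuclideanSpace ℝ (Fin n) → ℝ) (hg : ContDiff ℝ 2 g)
    {a₀ c₀ : ℝ} (ha₀ : 0 ≤ a₀) (hc₀ : 0 < c₀)
    (hcoer : ∀ x : EuclideanSpace ℝ (Fin n), ⟪gradient g x, x⟫ ≥ c₀ * ‖x‖ ^ 2 - a₀)
    (hfin : {x : EuclideanSpace ℝ (Fin n) | gradient g x = 0}.Finite)
    (w : ℝ → EuclideanSpace ℝ (Fin n))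
    (hw : ∀ s : ℝ, HasDerivAt w (-(gradient g (w s))) s)
    (x₁ : EuclideanSpace ℝ (Fin n)) (hx₁ : gradient g x₁ = 0)
    (s : ℕ → ℝ) (hs : Tendsto s atTop atTop)
    (hlim : Tendsto (fun k => w (-(s k))) atTop (nhds x₁)) :
    Tendsto w atBot (nhds x₁) := by
  have hisol : ∀ᶠ x in 𝓝[≠] x₁, gradient g x ≠ 0 :=
    nhdsNE_le_cofinite x₁ hfin.compl_mem_cofinite
  have hflow : IsGradientDescentOn g w (Iic 0) := fun t _ ↦ (hw t).hasDerivWithinAt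
  exact alpha_limit_is_critical_point_general (hg.of_le one_le_two) hflow hisol
    (.of_comp (tendsto_neg_atTop_atBot.comp hs) hlim.mapClusterPt)
end
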